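/- arXiv:0708.1547 — 2 statements merged into one kernel-verified Lean document; each statement's English description precedes it below -/
import Mathlib

section
/- Let n ≥ 3. Let K(x) = ∫_{S^{n−1}} e^{2πi x·ω} dσ(ω) be the Fourier transform of the surface measure of the unit sphere (a smooth function on ℝⁿ), and set K̃(x) = x · ∇K(x). Then there is a constant C depending only on n such that for every Schwartz function f on ℝⁿ, ‖f ∗ K̃‖_{L^{(2n+2)/(n−3)}(ℝⁿ)} ≤ C ‖f‖_{L^{(2n+2)/(n+5)}(ℝⁿ)} (for n = 3 the target exponent is ∞, i.e. the bound is in L^∞). -/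
open MeasureTheory Complex Metric
open scoped ENNReal Real RealInnerProductSpace

noncomputable section

set_option linter.unusedSectionVars false

/-- Differentiation under the integral sign for `z ↦ ∫ φ exp(z b)` with bounded `b`. -/
theorem hasDerivAt_integral_mul_cexp {α : Type*} [MeasurableSpace α] {μ : Measure α}
    {φ b : α → ℂ} (hφ : Integrable φ μ) (hb : AEStronglyMeasurable b μ) {M : ℝ}
    (hM : ∀ a, ‖b a‖ ≤ M) (z : ℂ) :
    HasDerivAt (fun z : ℂ => ∫ a, φ a * cexp (z * b a) ∂μ)
      (∫ a, φ a * b a * cexp (z * b a) ∂μ) z := by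
  have hexp : ∀ w : ℂ, AEStronglyMeasurable (fun a => cexp (w * b a)) μ := fun w =>
    Complex.continuous_exp.comp_aestronglyMeasurable (hb.const_mul w)
  have hnorm : ∀ w ∈ ball z 1, ∀ a, ‖cexp (w * b a)‖ ≤ Real.exp ((‖z‖ + 1) * M) := by
    intro w hw a
    refine (Complex.norm_exp_le_exp_norm _).trans (Real.exp_le_exp.2 ?_)
    rw [norm_mul]
    have : ‖w‖ ≤ ‖z‖ + 1 := by
      have h1 := norm_le_norm_add_norm_sub' w z
      have h2 : ‖w - z‖ < 1 := by simpa [dist_eq_norm] using hw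
      linarith
    exact mul_le_mul this (hM a) (norm_nonneg _) (by positivity)
  refine (hasDerivAt_integral_of_dominated_loc_of_deriv_le (s := ball z 1)
    (bound := fun a => ‖φ a‖ * (M * Real.exp ((‖z‖ + 1) * M)))
    (F' := fun z a => φ a * b a * cexp (z * b a))
    (ball_mem_nhds z one_pos) (Filter.Eventually.of_forall fun w => hφ.1.mul (hexp w)) ?_
    ((hφ.1.mul hb).mul (hexp z)) ?_ (hφ.norm.mul_const _) ?_).2
  · refine hφ.mul_bdd (c := Real.exp ((‖z‖ + 1) * M)) (hexp z) ?_
    exact Filter.Eventually.of_forall fun a => hnorm z (mem_ball_self one_pos) a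
  · refine Filter.Eventually.of_forall fun a w hw => ?_
    rw [norm_mul, norm_mul, mul_assoc]
    have h1 := hnorm w hw a
    have h2 := hM a
    have h3 : 0 ≤ M := (norm_nonneg _).trans h2
    gcongr
  · refine Filter.Eventually.of_forall fun a w _ => ?_
    have := (((hasDerivAt_id w).mul_const (b a)).cexp).const_mul (φ a)
    refine this.congr_deriv ?_
    simp only [one_mul, id_eq]; ring

section SphereTransform

variable {E : Type*} [NormedAddCommGroup E] [InnerProductSpace ℝ E] [FiniteDimensional ℝ E]
  [MeasurableSpace E] [BorelSpace E]

/-- The Fourier transform of the surface measure of the unit sphere. -/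
def sphereWave (z : E) : ℂ :=
  ∫ ω : sphere (0 : E) 1, cexp (2 * (π : ℂ) * I * ((⟪z, (ω : E)⟫ : ℝ) : ℂ))
    ∂((volume : Measure E).toSphere)

/-- The kernel `x · ∇ K`, where `K` is the Fourier transform of the surface measure. -/
def eulerKernel (z : E) : ℂ :=
  ∫ ω : sphere (0 : E) 1, (2 * (π : ℂ) * I * ((⟪z, (ω : E)⟫ : ℝ) : ℂ)) *
    cexp (2 * (π : ℂ) * I * ((⟪z, (ω : E)⟫ : ℝ) : ℂ)) ∂((volume : Measure E).toSphere)

theorem abs_inner_sphere_le (z : E) (ω : sphere (0 : E) 1) : |⟪z, (ω : E)⟫| ≤ ‖z‖ := by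
  simpa using abs_real_inner_le_norm z (ω : E)

theorem norm_cexp_two_pi_I (t : ℝ) : ‖cexp (2 * (π : ℂ) * I * (t : ℂ))‖ = 1 := by
  rw [show 2 * (π : ℂ) * I * (t : ℂ) = ((2 * π * t : ℝ) : ℂ) * I by push_cast; ring]
  exact Complex.norm_exp_ofReal_mul_I _

theorem differentiable_sphereWave : Differentiable ℝ (sphereWave : E → ℂ) := by
  intro x
  let F' : E → sphere (0 : E) 1 → E →L[ℝ] ℂ := fun z ω =>
    (cexp (2 * (π : ℂ) * I * ((⟪z, (ω : E)⟫ : ℝ) : ℂ)) * (2 * (π : ℂ) * I)) •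
      (Complex.ofRealCLM.comp (innerSL ℝ (ω : E)))
  refine (hasFDerivAt_integral_of_dominated_of_fderiv_le (s := Set.univ)
    (F' := F') (bound := fun _ => 2 * π) Filter.univ_mem ?_ ?_ ?_ ?_ ?_ ?_).differentiableAt
  · refine Filter.Eventually.of_forall fun z => ?_
    exact Continuous.aestronglyMeasurable (by fun_prop)
  · refine Integrable.of_bound (C := 1) (Continuous.aestronglyMeasurable (by fun_prop)) ?_
    exact Filter.Eventually.of_forall fun ω => (norm_cexp_two_pi_I _).le
  · refine Continuous.aestronglyMeasurable ?_
    have h : Continuous fun ω : sphere (0 : E) 1 => innerSL ℝ (ω : E) :=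
      (innerSL ℝ).continuous.comp continuous_subtype_val
    have h' : Continuous fun ω : sphere (0 : E) 1 =>
        cexp (2 * (π : ℂ) * I * ((⟪x, (ω : E)⟫ : ℝ) : ℂ)) * (2 * (π : ℂ) * I) := by fun_prop
    refine h'.smul ?_
    exact (ContinuousLinearMap.compL ℝ E ℝ ℂ Complex.ofRealCLM).continuous.comp h
  · refine Filter.Eventually.of_forall fun ω z _ => ?_
    have h1 : ‖Complex.ofRealCLM.comp (innerSL ℝ (ω : E))‖ ≤ 1 := by
      refine (ContinuousLinearMap.opNorm_comp_le _ _).trans ?_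
      simp
    have h2 : ‖cexp (2 * (π : ℂ) * I * ((⟪z, (ω : E)⟫ : ℝ) : ℂ)) * (2 * (π : ℂ) * I)‖ = 2 * π := by
      rw [norm_mul, norm_cexp_two_pi_I]; simp [abs_of_pos Real.pi_pos]
    simp only [F']
    rw [norm_smul, h2]
    nlinarith [Real.pi_pos]
  · exact integrable_const _
  · refine Filter.Eventually.of_forall fun ω z _ => ?_
    have h : HasFDerivAt (fun z : E => ((⟪z, (ω : E)⟫ : ℝ) : ℂ))
        (Complex.ofRealCLM.comp (innerSL ℝ (ω : E))) z := by
      have := (Complex.ofRealCLM.comp (innerSL ℝ (ω : E))).hasFDerivAt (x := z)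
      refine this.congr_of_eventuallyEq (Filter.Eventually.of_forall fun y => ?_)
      simp [real_inner_comm]
    have := (h.const_mul (2 * (π : ℂ) * I)).cexp
    refine this.congr_fderiv ?_
    ext v; simp [F']; ring

/-- The restriction of the sphere integral to a line through the origin, and its derivatives. -/
theorem hasDerivAt_sphere_line (φ : sphere (0 : E) 1 → ℂ) (hφ : Continuous φ) (v x : E) (s : ℝ) :
    HasDerivAt (fun s : ℝ => ∫ ω : sphere (0 : E) 1,
        φ ω * cexp (2 * (π : ℂ) * I * ((⟪x + s • v, (ω : E)⟫ : ℝ) : ℂ))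
          ∂(volume : Measure E).toSphere)
      (∫ ω : sphere (0 : E) 1, φ ω * (2 * (π : ℂ) * I * ((⟪v, (ω : E)⟫ : ℝ) : ℂ)) *
        cexp (2 * (π : ℂ) * I * ((⟪x + s • v, (ω : E)⟫ : ℝ) : ℂ)) ∂(volume : Measure E).toSphere)
      s := by
  have hcont : Continuous fun ω : sphere (0 : E) 1 =>
      φ ω * cexp (2 * (π : ℂ) * I * ((⟪x, (ω : E)⟫ : ℝ) : ℂ)) := by fun_prop
  have hInt : Integrable (fun ω : sphere (0 : E) 1 =>
      φ ω * cexp (2 * (π : ℂ) * I * ((⟪x, (ω : E)⟫ : ℝ) : ℂ))) (volume : Measure E).toSphere :=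
    hcont.integrable_of_hasCompactSupport (HasCompactSupport.of_compactSpace _)
  have hb : Continuous fun ω : sphere (0 : E) 1 => 2 * (π : ℂ) * I * ((⟪v, (ω : E)⟫ : ℝ) : ℂ) := by
    fun_prop
  have h := (hasDerivAt_integral_mul_cexp hInt hb.aestronglyMeasurable (M := 2 * π * ‖v‖)
    (fun ω => by
      have := abs_inner_sphere_le v ω
      simp only [norm_mul, norm_real, norm_I, Complex.norm_ofNat, Real.norm_eq_abs,
        abs_of_pos Real.pi_pos, mul_one]
      gcongr) (s : ℂ)).comp_ofReal
  have key : ∀ (s : ℝ) (ω : sphere (0 : E) 1),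
      cexp (2 * (π : ℂ) * I * ((⟪x + s • v, (ω : E)⟫ : ℝ) : ℂ)) =
      cexp (2 * (π : ℂ) * I * ((⟪x, (ω : E)⟫ : ℝ) : ℂ)) *
        cexp (s * (2 * (π : ℂ) * I * ((⟪v, (ω : E)⟫ : ℝ) : ℂ))) := by
    intro s ω
    rw [← Complex.exp_add, inner_add_left, inner_smul_left]
    congr 1; push_cast; simp; ring
  simp_rw [key]
  convert h using 1
  · funext s; congr 1; funext ω; ring
  · congr 1; funext ω; ring

theorem fderiv_sphereWave_self (x : E) : fderiv ℝ sphereWave x x = eulerKernel x := by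
  have h1 := hasDerivAt_sphere_line (E := E) (fun _ => 1) continuous_const x x 0
  have h2 : HasDerivAt (fun s : ℝ => sphereWave (x + s • x)) (fderiv ℝ sphereWave x x) 0 := by
    have hx : HasFDerivAt (sphereWave : E → ℂ) (fderiv ℝ sphereWave x) (x + (0 : ℝ) • x) := by
      simpa using (differentiable_sphereWave x).hasFDerivAt
    have hl : HasDerivAt (fun s : ℝ => x + s • x) x 0 := by
      simpa using ((hasDerivAt_id (0 : ℝ)).smul_const x).const_add x
    exact hx.comp_hasDerivAt _ hl
  simp only [one_mul, zero_smul, add_zero] at h1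
  exact h2.unique h1

open scoped Pointwise in
/-- The surface measure is invariant under linear isometries. -/
theorem integral_toSphere_comp_isometry (U : E ≃ₗᵢ[ℝ] E) (F : E → ℂ) :
    ∫ ω : sphere (0 : E) 1, F (U ω) ∂(volume : Measure E).toSphere =
      ∫ ω : sphere (0 : E) 1, F ω ∂(volume : Measure E).toSphere := by
  let e : sphere (0 : E) 1 ≃ₜ sphere (0 : E) 1 :=
    U.toHomeomorph.subtype (fun x => by simp)
  have he : MeasurePreserving e (volume : Measure E).toSphere (volume : Measure E).toSphere := by
    refine ⟨e.measurable, Measure.ext fun s hs => ?_⟩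
    rw [Measure.map_apply e.measurable hs, Measure.toSphere_apply' _ hs,
      Measure.toSphere_apply' _ (e.measurable hs)]
    congr 1
    rw [← U.measurePreserving.measure_preimage_emb U.toHomeomorph.measurableEmbedding
      (Set.Ioo (0 : ℝ) 1 • (Subtype.val '' s))]
    congr 1
    ext y
    simp only [Set.mem_smul, Set.mem_image, Set.mem_preimage, Subtype.exists]
    constructor
    · rintro ⟨r, hr, _, ⟨w, hw, hws, rfl⟩, rfl⟩
      exact ⟨r, hr, U w, ⟨U w, by simpa using hw, hws, rfl⟩, by simp⟩
    · rintro ⟨r, hr, _, ⟨w, hw, hws, rfl⟩, h⟩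
      refine ⟨r, hr, U.symm w, ⟨U.symm w, by simpa using hw, ?_, rfl⟩, ?_⟩
      · have : e ⟨U.symm w, by simpa using hw⟩ = ⟨w, hw⟩ := by
          ext; simp [e]
        rw [this]; exact hws
      · rw [← map_smul, h]; simp
  exact he.integral_comp e.measurableEmbedding (fun ω : sphere (0 : E) 1 => F ω)

theorem sphereWave_eq_of_norm_eq {x y : E} (h : ‖x‖ = ‖y‖) :
    (sphereWave x : ℂ) = sphereWave y := by
  let U := (ℝ ∙ (y - x))ᗮ.reflection
  have hU : U y = x := Submodule.reflection_sub h.symm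
  rw [sphereWave, ← hU,
    ← integral_toSphere_comp_isometry U (fun v => cexp (2 * (π : ℂ) * I * ((⟪U y, v⟫ : ℝ) : ℂ)))]
  simp [sphereWave]

theorem eulerKernel_eq_of_norm_eq {x y : E} (h : ‖x‖ = ‖y‖) :
    (eulerKernel x : ℂ) = eulerKernel y := by
  let U := (ℝ ∙ (y - x))ᗮ.reflection
  have hU : U y = x := Submodule.reflection_sub h.symm
  rw [eulerKernel, ← hU,
    ← integral_toSphere_comp_isometry U (fun v => (2 * (π : ℂ) * I * ((⟪U y, v⟫ : ℝ) : ℂ)) *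
      cexp (2 * (π : ℂ) * I * ((⟪U y, v⟫ : ℝ) : ℂ)))]
  simp [eulerKernel]

end SphereTransform

/-- Energy bound for solutions of `u'' + (m / r) u' + c² u = 0`: the derivative decays like
`r ^ (-m / 2)`. -/
theorem radial_ode_decay {u u' u'' : ℝ → ℝ} {m : ℕ} (hm : 2 ≤ m) {c : ℝ} (hc : 1 ≤ c)
    (h1 : ∀ r > 0, HasDerivAt u (u' r) r) (h2 : ∀ r > 0, HasDerivAt u' (u'' r) r)
    (ode : ∀ r > 0, r * (u'' r + c ^ 2 * u r) = -m * u' r) :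
    ∃ C, ∀ r : ℝ, m ≤ r → r ^ m * u' r ^ 2 ≤ C := by
  obtain ⟨j, rfl⟩ := Nat.exists_eq_add_of_le' hm
  set M : ℝ := ((j + 2 : ℕ) : ℝ) with hM
  have hM' : M = j + 2 := by rw [hM]; push_cast; ring
  have hM2 : 2 ≤ M := by rw [hM']; have := Nat.cast_nonneg (α := ℝ) j; linarith
  let H : ℝ → ℝ := fun r =>
    r ^ (j + 2) * (u' r ^ 2 + c ^ 2 * u r ^ 2) + M * r ^ (j + 1) * (u r * u' r)
  have hH : ∀ r > 0, HasDerivAt H (-M * r ^ j * (u r * u' r)) r := by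
    intro r hr
    have hu := h1 r hr
    have hu' := h2 r hr
    have d := ((hasDerivAt_pow (j + 2) r).mul ((hu'.pow 2).add ((hu.pow 2).const_mul (c ^ 2)))).add
      (((hasDerivAt_pow (j + 1) r).const_mul M).mul (hu.mul hu'))
    refine d.congr_deriv ?_
    have o := ode r hr
    have o2 : r * u'' r = -M * u' r - c ^ 2 * r * u r := by linarith
    simp only [Pi.pow_apply, Pi.mul_apply, Pi.add_apply, Nat.add_sub_cancel, hM'] at *
    push_cast
    simp only [pow_succ]
    linear_combination (2 * r ^ j * r * u' r + (j + 2) * r ^ j * u r) * o2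
  have hE : ∀ r, |u r * u' r| ≤ (u' r ^ 2 + c ^ 2 * u r ^ 2) / 2 := by
    intro r
    have hc2 : 1 ≤ c ^ 2 := by nlinarith
    rw [abs_le]
    constructor <;> nlinarith [sq_nonneg (u r + u' r), sq_nonneg (u r - u' r), sq_nonneg (u r)]
  have hHE : ∀ r, M ≤ r → r ^ (j + 2) * (u' r ^ 2 + c ^ 2 * u r ^ 2) ≤ 2 * H r := by
    intro r hr
    have hr0 : 0 < r := by linarith
    have h := abs_le.1 (hE r)
    have hp : 0 ≤ r ^ (j + 1) := by positivity
    have hE0 : 0 ≤ u' r ^ 2 + c ^ 2 * u r ^ 2 := by positivity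
    have hk : -(r ^ (j + 1) * r * ((u' r ^ 2 + c ^ 2 * u r ^ 2) / 2)) ≤
        M * r ^ (j + 1) * (u r * u' r) := by
      have i1 : M * r ^ (j + 1) * (-((u' r ^ 2 + c ^ 2 * u r ^ 2) / 2)) ≤
        M * r ^ (j + 1) * (u r * u' r) := mul_le_mul_of_nonneg_left h.1 (by positivity)
      have i2 : M * (r ^ (j + 1) * ((u' r ^ 2 + c ^ 2 * u r ^ 2) / 2)) ≤
        r * (r ^ (j + 1) * ((u' r ^ 2 + c ^ 2 * u r ^ 2) / 2)) :=
        mul_le_mul_of_nonneg_right hr (by positivity)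
      linarith
    simp only [H]
    rw [pow_succ r (j + 1)]
    linarith
  let G : ℝ → ℝ := fun r => H r * Real.exp (M / r)
  have hG : ∀ r > 0, HasDerivAt G ((-M * r ^ j * (u r * u' r)) * Real.exp (M / r) +
      H r * (Real.exp (M / r) * (-M / r ^ 2))) r := by
    intro r hr
    refine (hH r hr).mul ?_
    have : HasDerivAt (fun r : ℝ => M / r) (-M / r ^ 2) r := by
      refine ((hasDerivAt_inv hr.ne').const_mul M).congr_deriv ?_
      field_simp
    exact this.exp
  have hanti : AntitoneOn G (Set.Ici M) := by
    refine antitoneOn_of_deriv_nonpos (convex_Ici M) ?_ ?_ ?_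
    · intro r hr
      exact (hG r (by linarith [Set.mem_Ici.1 hr])).continuousAt.continuousWithinAt
    · intro r hr
      rw [interior_Ici] at hr
      exact (hG r (by linarith [Set.mem_Ioi.1 hr])).differentiableAt.differentiableWithinAt
    · intro r hr
      rw [interior_Ici] at hr
      have hr' : M < r := hr
      have hr0 : 0 < r := by linarith
      rw [(hG r hr0).deriv]
      have h := abs_le.1 (hE r)
      have hh := hHE r hr'.le
      have i1 : M * r ^ j * (-((u' r ^ 2 + c ^ 2 * u r ^ 2) / 2)) ≤
        M * r ^ j * (u r * u' r) := mul_le_mul_of_nonneg_left h.1 (by positivity)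
      have i2 : M * (r ^ j * ((u' r ^ 2 + c ^ 2 * u r ^ 2) / 2)) ≤ H r * (M / r ^ 2) := by
        rw [← mul_div_assoc (H r) M (r ^ 2), le_div_iff₀ (by positivity)]
        have : M * (r ^ (j + 2) * (u' r ^ 2 + c ^ 2 * u r ^ 2)) ≤ M * (2 * H r) :=
          mul_le_mul_of_nonneg_left hh (by linarith)
        calc _ = M * (r ^ (j + 2) * (u' r ^ 2 + c ^ 2 * u r ^ 2)) / 2 := by ring
          _ ≤ _ := by linarith
      have : (-M * r ^ j * (u r * u' r)) - H r * (M / r ^ 2) ≤ 0 := by linarith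
      calc _ = ((-M * r ^ j * (u r * u' r)) - H r * (M / r ^ 2)) * Real.exp (M / r) := by ring
        _ ≤ 0 := mul_nonpos_of_nonpos_of_nonneg this (Real.exp_pos _).le
  refine ⟨2 * G M, fun r hr => ?_⟩
  have hr0 : 0 < r := by linarith
  have a1 := hHE r hr
  have a2 := hanti (Set.mem_Ici.2 le_rfl) (Set.mem_Ici.2 hr) hr
  have a0 : 0 ≤ r ^ (j + 2) * (u' r ^ 2 + c ^ 2 * u r ^ 2) := by positivity
  have a3 : H r ≤ G r := by
    have : 1 ≤ Real.exp (M / r) := Real.one_le_exp (by positivity)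
    have hn : 0 ≤ H r := by linarith
    simp only [G]; nlinarith
  have a4 : r ^ (j + 2) * u' r ^ 2 ≤ r ^ (j + 2) * (u' r ^ 2 + c ^ 2 * u r ^ 2) := by
    gcongr; nlinarith [mul_nonneg (sq_nonneg c) (sq_nonneg (u r))]
  linarith

section KernelDecay

variable {E : Type*} [NormedAddCommGroup E] [InnerProductSpace ℝ E] [FiniteDimensional ℝ E]
  [MeasurableSpace E] [BorelSpace E]

/-- Rotation invariance expresses the second derivative in a transversal direction through the
radial derivative. -/
theorem sphere_transversal_identity {e v : E} (he : ‖e‖ = 1) (hv : ‖v‖ = 1) (hev : ⟪e, v⟫ = 0)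
    {r : ℝ} (hr : 0 < r) :
    ∫ ω : sphere (0 : E) 1, (2 * (π : ℂ) * I * ((⟪v, (ω : E)⟫ : ℝ) : ℂ)) ^ 2 *
        cexp (2 * (π : ℂ) * I * ((⟪r • e, (ω : E)⟫ : ℝ) : ℂ)) ∂(volume : Measure E).toSphere =
    (r : ℂ)⁻¹ * ∫ ω : sphere (0 : E) 1, (2 * (π : ℂ) * I * ((⟪e, (ω : E)⟫ : ℝ) : ℂ)) *
        cexp (2 * (π : ℂ) * I * ((⟪r • e, (ω : E)⟫ : ℝ) : ℂ)) ∂(volume : Measure E).toSphere := by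
  let k' : ℝ → ℂ := fun t => ∫ ω : sphere (0 : E) 1,
    (2 * (π : ℂ) * I * ((⟪e, (ω : E)⟫ : ℝ) : ℂ)) *
      cexp (2 * (π : ℂ) * I * ((⟪t • e, (ω : E)⟫ : ℝ) : ℂ)) ∂(volume : Measure E).toSphere
  have hk : ∀ t : ℝ, HasDerivAt (fun t : ℝ => sphereWave (t • e)) (k' t) t := by
    intro t
    have := hasDerivAt_sphere_line (E := E) (fun _ => 1) continuous_const e 0 t
    simpa [k', sphereWave] using this
  have hk' : ∃ k'' : ℝ → ℂ, ∀ t, HasDerivAt k' (k'' t) t := by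
    refine ⟨fun t => ∫ ω : sphere (0 : E) 1, (2 * (π : ℂ) * I * ((⟪e, (ω : E)⟫ : ℝ) : ℂ)) *
      (2 * (π : ℂ) * I * ((⟪e, (ω : E)⟫ : ℝ) : ℂ)) *
      cexp (2 * (π : ℂ) * I * ((⟪t • e, (ω : E)⟫ : ℝ) : ℂ)) ∂(volume : Measure E).toSphere,
      fun t => ?_⟩
    have := hasDerivAt_sphere_line (E := E)
      (fun ω => 2 * (π : ℂ) * I * ((⟪e, (ω : E)⟫ : ℝ) : ℂ)) (by fun_prop) e 0 t
    simp only [zero_add] at this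
    exact this
  obtain ⟨k'', hk''⟩ := hk'
  let ρ : ℝ → ℝ := fun s => √(r ^ 2 + s ^ 2)
  have hpos : ∀ s, 0 < r ^ 2 + s ^ 2 := fun s => by positivity
  have hρpos : ∀ s, 0 < ρ s := fun s => Real.sqrt_pos.2 (hpos s)
  have hρ : ∀ s, HasDerivAt ρ (s / ρ s) s := by
    intro s
    have h0 : HasDerivAt (fun s : ℝ => r ^ 2 + s ^ 2) (2 * s) s := by
      simpa using (hasDerivAt_pow 2 s).const_add (r ^ 2)
    refine (h0.sqrt (hpos s).ne').congr_deriv ?_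
    simp only [ρ]; field_simp
  have hnorm : ∀ s : ℝ, ‖r • e + s • v‖ = ‖ρ s • e‖ := by
    intro s
    rw [norm_smul, he, mul_one, Real.norm_of_nonneg (hρpos s).le]
    simp only [ρ]
    rw [eq_comm, Real.sqrt_eq_iff_mul_self_eq (hpos s).le (norm_nonneg _),
      norm_add_mul_self_real]
    simp [norm_smul, he, hv, inner_smul_left, inner_smul_right, hev]
    ring
  have hfun : (fun s : ℝ => sphereWave (r • e + s • v)) = fun s => sphereWave (ρ s • e) := by
    funext s; exact sphereWave_eq_of_norm_eq (hnorm s)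
  have hL : ∀ s : ℝ, ∫ ω : sphere (0 : E) 1, (2 * (π : ℂ) * I * ((⟪v, (ω : E)⟫ : ℝ) : ℂ)) *
      cexp (2 * (π : ℂ) * I * ((⟪r • e + s • v, (ω : E)⟫ : ℝ) : ℂ)) ∂(volume : Measure E).toSphere
      = (s : ℂ) * ((ρ s : ℂ)⁻¹ * k' (ρ s)) := by
    intro s
    have d1 := hasDerivAt_sphere_line (E := E) (fun _ => 1) continuous_const v (r • e) s
    have d2 : HasDerivAt (fun s : ℝ => sphereWave (ρ s • e)) ((s / ρ s) • k' (ρ s)) s :=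
      (hk (ρ s)).scomp s (hρ s)
    rw [← hfun] at d2
    simp only [one_mul] at d1
    rw [d1.unique d2, Complex.real_smul]
    push_cast; ring
  have hR : HasDerivAt (fun s : ℝ => (s : ℂ) * ((ρ s : ℂ)⁻¹ * k' (ρ s)))
      ((ρ 0 : ℂ)⁻¹ * k' (ρ 0)) 0 := by
    have q1 : HasDerivAt (fun s : ℝ => ((ρ s : ℝ) : ℂ)⁻¹) (((-(0 / ρ 0) / ρ 0 ^ 2 : ℝ)) : ℂ) 0 := by
      have := ((hρ 0).inv (hρpos 0).ne').ofReal_comp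
      simpa using this
    have q2 : HasDerivAt (fun s : ℝ => k' (ρ s)) (((0 : ℝ) / ρ 0) • k'' (ρ 0)) 0 :=
      (hk'' (ρ 0)).scomp 0 (hρ 0)
    have := ((hasDerivAt_id (0 : ℝ)).ofReal_comp).mul (q1.mul q2)
    refine this.congr_deriv ?_
    simp
  have d := hasDerivAt_sphere_line (E := E)
    (fun ω => 2 * (π : ℂ) * I * ((⟪v, (ω : E)⟫ : ℝ) : ℂ)) (by fun_prop) v (r • e) 0
  simp_rw [hL] at d
  have := d.unique hR
  have hρ0 : ρ 0 = r := by simp [ρ, Real.sqrt_sq hr.le]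
  rw [hρ0] at this
  simpa [k', pow_two] using this

theorem norm_eulerKernel_le (x : E) :
    ‖eulerKernel x‖ ≤ 2 * π * ‖x‖ * ((volume : Measure E).toSphere).real Set.univ := by
  refine norm_integral_le_of_norm_le_const (Filter.Eventually.of_forall fun ω => ?_)
  rw [norm_mul, norm_cexp_two_pi_I]
  have := abs_inner_sphere_le x ω
  simp only [norm_mul, norm_real, norm_I, Complex.norm_ofNat, Real.norm_eq_abs,
    abs_of_pos Real.pi_pos, mul_one]
  gcongr

theorem sphere_radial_ode (hn : 0 < Module.finrank ℝ E) :
    ∃ (e : E) (k k' k'' : ℝ → ℂ), ‖e‖ = 1 ∧ (∀ t, HasDerivAt k (k' t) t) ∧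
      (∀ t, HasDerivAt k' (k'' t) t) ∧ (∀ t : ℝ, eulerKernel (t • e) = t * k' t) ∧
      ∀ t : ℝ, t > 0 → (t : ℂ) * (k'' t + (2 * π : ℂ) ^ 2 * k t) =
        -((Module.finrank ℝ E - 1 : ℕ) : ℂ) * k' t := by
  let b := stdOrthonormalBasis ℝ E
  let i₀ : Fin (Module.finrank ℝ E) := ⟨0, hn⟩
  let e : E := b i₀
  let ex : ℝ → sphere (0 : E) 1 → ℂ := fun t ω =>
    cexp (2 * (π : ℂ) * I * ((⟪t • e, (ω : E)⟫ : ℝ) : ℂ))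
  let co : Fin (Module.finrank ℝ E) → sphere (0 : E) 1 → ℂ := fun i ω =>
    2 * (π : ℂ) * I * ((⟪b i, (ω : E)⟫ : ℝ) : ℂ)
  have hInt : ∀ i t, Integrable (fun ω => co i ω ^ 2 * ex t ω) (volume : Measure E).toSphere := by
    intro i t
    have hcont : Continuous (fun ω => co i ω ^ 2 * ex t ω) := by
      simp only [co, ex]; fun_prop
    exact hcont.integrable_of_hasCompactSupport (HasCompactSupport.of_compactSpace _)
  refine ⟨e, fun t => ∫ ω, ex t ω ∂(volume : Measure E).toSphere,
    fun t => ∫ ω, co i₀ ω * ex t ω ∂(volume : Measure E).toSphere,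
    fun t => ∫ ω, co i₀ ω ^ 2 * ex t ω ∂(volume : Measure E).toSphere,
    b.orthonormal.1 _, fun t => ?_, fun t => ?_, fun t => ?_, fun t ht => ?_⟩
  · have := hasDerivAt_sphere_line (E := E) (fun _ => 1) continuous_const e 0 t
    simpa [ex, co] using this
  · have := hasDerivAt_sphere_line (E := E)
      (fun ω => 2 * (π : ℂ) * I * ((⟪e, (ω : E)⟫ : ℝ) : ℂ)) (by fun_prop) e 0 t
    simp only [zero_add, ← pow_two] at this
    exact this
  · simp only [eulerKernel, ex, co]
    rw [← integral_const_mul]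
    congr 1; funext ω
    rw [inner_smul_left]
    push_cast; simp [e]; ring
  · have hsum : ∑ i, ∫ ω, co i ω ^ 2 * ex t ω ∂(volume : Measure E).toSphere =
        -(2 * π : ℂ) ^ 2 * ∫ ω, ex t ω ∂(volume : Measure E).toSphere := by
      rw [← integral_finsetSum _ (fun i _ => hInt i t), ← integral_const_mul]
      congr 1; funext ω
      rw [← Finset.sum_mul]
      congr 1
      have h1 : ∑ i, ⟪b i, (ω : E)⟫ ^ 2 = 1 := by
        have := b.sum_sq_norm_inner_right (ω : E)
        simpa using this
      have h2 : ∑ i, (((⟪b i, (ω : E)⟫ : ℝ) : ℂ)) ^ 2 = 1 := by exact_mod_cast h1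
      simp only [co, mul_pow]
      rw [← Finset.mul_sum, h2, I_sq]; ring
    have htr : ∀ i ∈ Finset.univ.erase i₀, ∫ ω, co i ω ^ 2 * ex t ω ∂(volume : Measure E).toSphere =
        (t : ℂ)⁻¹ * ∫ ω, co i₀ ω * ex t ω ∂(volume : Measure E).toSphere := by
      intro i hi
      exact sphere_transversal_identity (b.orthonormal.1 _) (b.orthonormal.1 _)
        (b.orthonormal.2 (Finset.ne_of_mem_erase hi).symm) ht
    rw [← Finset.add_sum_erase _ _ (Finset.mem_univ i₀), Finset.sum_congr rfl htr] at hsum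
    simp only [Finset.sum_const, Finset.card_erase_of_mem (Finset.mem_univ i₀), Finset.card_univ,
      Fintype.card_fin, nsmul_eq_mul] at hsum
    have ht' : (t : ℂ) ≠ 0 := by exact_mod_cast ht.ne'
    have e1 : (t : ℂ) * (t : ℂ)⁻¹ = 1 := mul_inv_cancel₀ ht'
    linear_combination (t : ℂ) * hsum - ((Module.finrank ℝ E - 1 : ℕ) : ℂ) *
      (∫ ω, co i₀ ω * ex t ω ∂(volume : Measure E).toSphere) * e1

/-- Decay of the kernel `x · ∇ K`. -/
theorem exists_eulerKernel_decay (hn : 3 ≤ Module.finrank ℝ E) :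
    ∃ C : ℝ, 0 < C ∧ ∀ x : E,
      ‖eulerKernel x‖ * (1 + ‖x‖ ^ 2) ^ (((Module.finrank ℝ E : ℝ) - 3) / 4) ≤ C := by
  obtain ⟨e, k, k', k'', he, hk, hk', hker, hode⟩ := sphere_radial_ode (E := E) (by omega)
  obtain ⟨j, hj⟩ : ∃ j, Module.finrank ℝ E = j + 3 := ⟨Module.finrank ℝ E - 3, by omega⟩
  have hdim : Module.finrank ℝ E - 1 = j + 2 := by omega
  have hexp : ((Module.finrank ℝ E : ℝ) - 3) / 4 = j / 4 := by rw [hj]; push_cast; ring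
  rw [hdim] at hode
  rw [hexp]
  have hre : ∀ (f : ℝ → ℂ) (f' : ℂ) t, HasDerivAt f f' t →
      HasDerivAt (fun t => (f t).re) f'.re t := fun f f' t h =>
    (Complex.reCLM.hasFDerivAt).comp_hasDerivAt t h
  have him : ∀ (f : ℝ → ℂ) (f' : ℂ) t, HasDerivAt f f' t →
      HasDerivAt (fun t => (f t).im) f'.im t := fun f f' t h =>
    (Complex.imCLM.hasFDerivAt).comp_hasDerivAt t h
  have hpi : (1 : ℝ) ≤ 2 * π := by linarith [Real.pi_gt_three]
  have hode' : ∀ t : ℝ, t > 0 → (t : ℂ) * (k'' t + ((2 * π) ^ 2 : ℝ) * k t) =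
      ((-(j + 2 : ℕ) : ℝ) : ℂ) * k' t := by
    intro t ht
    have := hode t ht
    push_cast at this ⊢
    exact this
  obtain ⟨C₁, h₁⟩ := radial_ode_decay (m := j + 2) (by omega) hpi
    (fun t _ => hre _ _ t (hk t)) (fun t _ => hre _ _ t (hk' t)) (fun t ht => by
      have := congrArg Complex.re (hode' t ht)
      rw [re_ofReal_mul, re_ofReal_mul, add_re, re_ofReal_mul] at this
      exact this)
  obtain ⟨C₂, h₂⟩ := radial_ode_decay (m := j + 2) (by omega) hpi
    (fun t _ => him _ _ t (hk t)) (fun t _ => him _ _ t (hk' t)) (fun t ht => by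
      have := congrArg Complex.im (hode' t ht)
      rw [im_ofReal_mul, im_ofReal_mul, add_im, im_ofReal_mul] at this
      exact this)
  set S := ((volume : Measure E).toSphere).real Set.univ
  have hS : 0 ≤ S := measureReal_nonneg
  set M : ℝ := ((j + 2 : ℕ) : ℝ)
  have hM : 1 ≤ M := by simp only [M]; push_cast; have := Nat.cast_nonneg (α := ℝ) j; linarith
  refine ⟨√((2 : ℝ) ^ ((j : ℝ) / 2) * (C₁ + C₂)) + 2 * π * M * S * (1 + M ^ 2) ^ ((j : ℝ) / 4) + 1,
    by positivity, fun x => ?_⟩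
  rcases le_or_gt M ‖x‖ with hx | hx
  · have hx1 : 1 ≤ ‖x‖ := hM.trans hx
    have hK : ‖eulerKernel x‖ = ‖x‖ * ‖k' ‖x‖‖ := by
      rw [eulerKernel_eq_of_norm_eq (y := ‖x‖ • e) (by simp [norm_smul, he]), hker]
      simp
    have hdec : ‖x‖ ^ (j + 2) * ‖k' ‖x‖‖ ^ 2 ≤ C₁ + C₂ := by
      rw [Complex.sq_norm, normSq_apply]
      have a := h₁ ‖x‖ hx
      have b := h₂ ‖x‖ hx
      nlinarith
    have hw : ((1 + ‖x‖ ^ 2) ^ ((j : ℝ) / 4)) ^ 2 ≤ (2 : ℝ) ^ ((j : ℝ) / 2) * ‖x‖ ^ j := by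
      rw [← Real.rpow_natCast, ← Real.rpow_mul (by positivity)]
      have e1 : (j : ℝ) / 4 * ((2 : ℕ) : ℝ) = j / 2 := by push_cast; ring
      rw [e1]
      calc (1 + ‖x‖ ^ 2) ^ ((j : ℝ) / 2) ≤ (2 * ‖x‖ ^ 2) ^ ((j : ℝ) / 2) := by
            gcongr; nlinarith
        _ = _ := by
            rw [Real.mul_rpow (by norm_num) (by positivity), ← Real.rpow_natCast ‖x‖ 2,
              ← Real.rpow_mul (norm_nonneg x), ← Real.rpow_natCast ‖x‖ j]
            congr 2; push_cast; ring
    have : ‖eulerKernel x‖ * (1 + ‖x‖ ^ 2) ^ ((j : ℝ) / 4) ≤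
        √((2 : ℝ) ^ ((j : ℝ) / 2) * (C₁ + C₂)) := by
      refine Real.le_sqrt_of_sq_le ?_
      rw [mul_pow, hK, mul_pow]
      calc _ ≤ ‖x‖ ^ 2 * ‖k' ‖x‖‖ ^ 2 * ((2 : ℝ) ^ ((j : ℝ) / 2) * ‖x‖ ^ j) := by gcongr
        _ = (2 : ℝ) ^ ((j : ℝ) / 2) * (‖x‖ ^ (j + 2) * ‖k' ‖x‖‖ ^ 2) := by ring
        _ ≤ _ := by gcongr
    have : 0 ≤ 2 * π * M * S * (1 + M ^ 2) ^ ((j : ℝ) / 4) := by positivity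
    linarith
  · have h := norm_eulerKernel_le x
    have : ‖eulerKernel x‖ * (1 + ‖x‖ ^ 2) ^ ((j : ℝ) / 4) ≤
        2 * π * M * S * (1 + M ^ 2) ^ ((j : ℝ) / 4) := by
      gcongr
      exact h.trans (by gcongr)
    have := Real.sqrt_nonneg ((2 : ℝ) ^ ((j : ℝ) / 2) * (C₁ + C₂))
    linarith

end KernelDecay

/-- Layer cake estimate for negative powers. -/
theorem lintegral_inv_pow_le {α : Type*} [MeasurableSpace α] {μ : Measure α} [SFinite μ]
    {D : α → ℝ} (hD : Measurable D) (hD0 : ∀ a, 0 ≤ D a) {m : ℕ} (hm : 0 < m) :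
    ∫⁻ a, ENNReal.ofReal ((D a ^ m)⁻¹) ∂μ ≤
      ∫⁻ r in Set.Ioi (0 : ℝ), ENNReal.ofReal (m * (r ^ (m + 1))⁻¹) * μ {a | D a < r} := by
  have hpt : ∀ a, ENNReal.ofReal ((D a ^ m)⁻¹) ≤
      ∫⁻ r in Set.Ioi (0 : ℝ), ENNReal.ofReal (m * (r ^ (m + 1))⁻¹) *
        {a | D a < r}.indicator 1 a := by
    intro a
    rcases (hD0 a).eq_or_lt with h | h
    · simp [← h, hm.ne']
    · have hm' : -((m : ℝ) + 1) < -1 := by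
        have : (0 : ℝ) < m := by exact_mod_cast hm
        linarith
      have hi := integrableOn_Ioi_rpow_of_lt hm' h
      have hval := integral_Ioi_rpow_of_lt hm' h
      have e1 : ∀ r ∈ Set.Ioi (D a), (m : ℝ) * r ^ (-((m : ℝ) + 1)) = m * (r ^ (m + 1))⁻¹ := by
        intro r hr
        have hr0 : 0 < r := h.trans hr
        rw [Real.rpow_neg hr0.le, ← Nat.cast_add_one, Real.rpow_natCast]
      have hval2 : ∫ r in Set.Ioi (D a), (m : ℝ) * r ^ (-((m : ℝ) + 1)) = (D a ^ m)⁻¹ := by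
        rw [integral_const_mul, hval]
        have : (0 : ℝ) < m := by exact_mod_cast hm
        rw [show -((m : ℝ) + 1) + 1 = -m by ring, Real.rpow_neg h.le, Real.rpow_natCast]
        field_simp
      rw [← hval2, ofReal_integral_eq_lintegral_ofReal (hi.const_mul _)
        (by
          filter_upwards [ae_restrict_mem measurableSet_Ioi] with r hr
          have hr0 : 0 < r := h.trans hr
          positivity)]
      rw [setLIntegral_congr_fun measurableSet_Ioi (g := fun r =>
        ENNReal.ofReal (m * (r ^ (m + 1))⁻¹) * {a | D a < r}.indicator 1 a) (fun r hr => by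
          have : a ∈ {a | D a < r} := hr
          simp only [Set.indicator_of_mem this, Pi.one_apply, mul_one]
          rw [e1 r hr])]
      exact lintegral_mono_set (Set.Ioi_subset_Ioi h.le)
  refine (lintegral_mono hpt).trans ?_
  have hmeas : Measurable fun q : α × ℝ => ENNReal.ofReal (m * (q.2 ^ (m + 1))⁻¹) *
        {a | D a < q.2}.indicator (1 : α → ℝ≥0∞) q.1 := by
    refine Measurable.mul (by fun_prop) ?_
    have hs : MeasurableSet {q : α × ℝ | D q.1 < q.2} :=
      measurableSet_lt (hD.comp measurable_fst) measurable_snd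
    exact (measurable_one.indicator hs : Measurable ({q : α × ℝ | D q.1 < q.2}.indicator
      (1 : α × ℝ → ℝ≥0∞)))
  rw [lintegral_lintegral_swap hmeas.aemeasurable]
  refine lintegral_mono fun r => ?_
  have hs : MeasurableSet {a | D a < r} := measurableSet_lt hD measurable_const
  rw [lintegral_const_mul _ (measurable_one.indicator hs), lintegral_indicator_one hs]

section DoubleLayer

variable {E : Type*} [NormedAddCommGroup E] [InnerProductSpace ℝ E] [FiniteDimensional ℝ E]
  [MeasurableSpace E] [BorelSpace E]

open scoped Pointwise in
/-- The surface measure of a spherical cap. -/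
theorem exists_toSphere_cap_le (hn : 0 < Module.finrank ℝ E) :
    ∃ C : ℝ, 0 ≤ C ∧ ∀ (ξ : E) (r : ℝ), 0 < r →
      (volume : Measure E).toSphere {ω : sphere (0 : E) 1 | ‖ξ - (ω : E)‖ < r} ≤
        ENNReal.ofReal (C * r ^ (Module.finrank ℝ E - 1)) := by
  obtain ⟨d, hd⟩ : ∃ d, Module.finrank ℝ E = d + 1 := ⟨_, (Nat.succ_pred_eq_of_pos hn).symm⟩
  set S := ((volume : Measure E).toSphere).real Set.univ
  set V := (volume : Measure E).real (ball 0 1)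
  rw [hd, Nat.add_sub_cancel]
  refine ⟨S + (d + 1) * (2 * 3 ^ (d + 1) * V), by positivity, fun ξ r hr => ?_⟩
  have htriv : 1 ≤ r → (volume : Measure E).toSphere {ω : sphere (0 : E) 1 | ‖ξ - (ω : E)‖ < r} ≤
        ENNReal.ofReal ((S + (d + 1) * (2 * 3 ^ (d + 1) * V)) * r ^ d) := by
    intro h1
    refine (measure_mono (Set.subset_univ _)).trans ?_
    rw [← ofReal_measureReal (measure_ne_top _ _)]
    refine ENNReal.ofReal_le_ofReal ?_
    have : 1 ≤ r ^ d := one_le_pow₀ h1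
    have h0 : 0 ≤ (d + 1) * (2 * 3 ^ (d + 1) * V) := by positivity
    have hS : 0 ≤ S := measureReal_nonneg
    change S ≤ _
    nlinarith
  rcases le_or_gt 1 r with h1 | h1
  · exact htriv h1
  rcases le_or_gt ‖ξ‖ 2 with hξ | hξ
  swap
  · have : {ω : sphere (0 : E) 1 | ‖ξ - (ω : E)‖ < r} = ∅ := by
      ext ω
      simp only [Set.mem_ofPred_eq, Set.mem_empty_iff_false, iff_false, not_lt]
      have := norm_sub_norm_le ξ (ω : E)
      have h2 : ‖(ω : E)‖ = 1 := by simp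
      linarith
    simp [this]
  have hms : MeasurableSet {ω : sphere (0 : E) 1 | ‖ξ - (ω : E)‖ < r} :=
    measurableSet_lt (by fun_prop) measurable_const
  rw [Measure.toSphere_apply' _ hms]
  set N := ⌊1 / r⌋₊ + 1
  have hsub : Set.Ioo (0 : ℝ) 1 • (Subtype.val '' {ω : sphere (0 : E) 1 | ‖ξ - (ω : E)‖ < r}) ⊆
      ⋃ k ∈ Finset.range N, ball ((k * r : ℝ) • ξ) (3 * r) := by
    rintro _ ⟨s, hs, _, ⟨ω, hω, rfl⟩, rfl⟩
    simp only [Set.mem_iUnion, Finset.mem_range, exists_prop]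
    refine ⟨⌊s / r⌋₊, ?_, ?_⟩
    · exact Nat.lt_succ_of_le (Nat.floor_le_floor (by gcongr; exact hs.2.le))
    · have a1 : (⌊s / r⌋₊ : ℝ) * r ≤ s := by
        have := Nat.floor_le (a := s / r) (by have := hs.1; positivity)
        rwa [le_div_iff₀ hr] at this
      have a2 : s < (⌊s / r⌋₊ + 1 : ℝ) * r := by
        have := Nat.lt_floor_add_one (s / r)
        rwa [div_lt_iff₀ hr] at this
      have hω' : ‖ξ - (ω : E)‖ < r := hω
      rw [mem_ball, dist_eq_norm]
      have e1 : s • (ω : E) - (⌊s / r⌋₊ * r : ℝ) • ξ =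
          -(s • (ξ - (ω : E))) + (s - ⌊s / r⌋₊ * r) • ξ := by
        simp only [smul_sub, sub_smul]; abel
      change ‖s • (ω : E) - (⌊s / r⌋₊ * r : ℝ) • ξ‖ < _
      rw [e1]
      refine (norm_add_le _ _).trans_lt ?_
      rw [norm_neg, norm_smul, norm_smul, Real.norm_of_nonneg hs.1.le,
        Real.norm_of_nonneg (by linarith)]
      have b1 : s * ‖ξ - (ω : E)‖ < r := by nlinarith [hs.1, hs.2, norm_nonneg (ξ - (ω : E))]
      have b2 : (s - ⌊s / r⌋₊ * r) * ‖ξ‖ ≤ r * 2 := by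
        apply mul_le_mul _ hξ (norm_nonneg _) hr.le
        linarith
      linarith
  have hball : ∀ c : E, (volume : Measure E) (ball c (3 * r)) =
      ENNReal.ofReal ((3 * r) ^ (d + 1) * V) := by
    intro c
    rw [Measure.addHaar_ball_of_pos _ _ (by positivity), hd, ENNReal.ofReal_mul (by positivity),
      ofReal_measureReal (measure_ball_lt_top.ne)]
  have hN : (N : ℝ) * r ≤ 2 := by
    have h2 : (⌊1 / r⌋₊ : ℝ) ≤ 1 / r := Nat.floor_le (by positivity)
    have h3 : (N : ℝ) ≤ 1 / r + 1 := by simp only [N]; push_cast; linarith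
    calc (N : ℝ) * r ≤ (1 / r + 1) * r := by gcongr
      _ = 1 + r := by field_simp
      _ ≤ 2 := by linarith
  have hvol : (volume : Measure E) (Set.Ioo (0 : ℝ) 1 •
      (Subtype.val '' {ω : sphere (0 : E) 1 | ‖ξ - (ω : E)‖ < r})) ≤
      ENNReal.ofReal (2 * 3 ^ (d + 1) * V * r ^ d) := by
    refine (measure_mono hsub).trans ((measure_biUnion_finset_le _ _).trans ?_)
    simp only [hball, Finset.sum_const, Finset.card_range, nsmul_eq_mul]
    rw [← ENNReal.ofReal_natCast, ← ENNReal.ofReal_mul (by positivity)]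
    refine ENNReal.ofReal_le_ofReal ?_
    have hV : 0 ≤ V := measureReal_nonneg
    calc (N : ℝ) * ((3 * r) ^ (d + 1) * V) = (N * r) * (3 ^ (d + 1) * V * r ^ d) := by ring
      _ ≤ 2 * (3 ^ (d + 1) * V * r ^ d) := by gcongr
      _ = _ := by ring
  rw [hd]
  calc ((d + 1 : ℕ) : ℝ≥0∞) * _ ≤ ((d + 1 : ℕ) : ℝ≥0∞) *
        ENNReal.ofReal (2 * 3 ^ (d + 1) * V * r ^ d) := by gcongr
    _ = ENNReal.ofReal ((d + 1) * (2 * 3 ^ (d + 1) * V * r ^ d)) := by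
        rw [← ENNReal.ofReal_natCast, ← ENNReal.ofReal_mul (by positivity)]; push_cast; rfl
    _ ≤ _ := by
        refine ENNReal.ofReal_le_ofReal ?_
        have hS : 0 ≤ S * r ^ d := by positivity
        linarith

/-- The double layer potential of the unit sphere is bounded, with absolute values inside. -/
theorem exists_double_layer_le (hn : 3 ≤ Module.finrank ℝ E) :
    ∃ C : ℝ, 0 ≤ C ∧ ∀ ξ : E, ∫⁻ ω : sphere (0 : E) 1,
      ENNReal.ofReal (|⟪(ω : E), ξ - (ω : E)⟫| * (‖ξ - (ω : E)‖ ^ Module.finrank ℝ E)⁻¹)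
        ∂(volume : Measure E).toSphere ≤ ENNReal.ofReal C := by
  obtain ⟨j, hj⟩ : ∃ j, Module.finrank ℝ E = j + 3 := ⟨Module.finrank ℝ E - 3, by omega⟩
  obtain ⟨A, hA, hcap⟩ := exists_toSphere_cap_le (E := E) (by omega)
  rw [hj] at hcap ⊢
  simp only [show j + 3 - 1 = j + 2 from rfl] at hcap
  set σ := (volume : Measure E).toSphere
  set S := σ.real Set.univ
  have hS : 0 ≤ S := measureReal_nonneg
  have hSσ : σ Set.univ = ENNReal.ofReal S := (ofReal_measureReal (measure_ne_top _ _)).symm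
  refine ⟨S + 2 * ((j + 3) * A) + ((j + 1) * A + (j + 1) * S), by positivity, fun ξ => ?_⟩
  set D : sphere (0 : E) 1 → ℝ := fun ω => ‖ξ - (ω : E)‖
  have hDm : Measurable D := by fun_prop
  have hD0 : ∀ ω, 0 ≤ D ω := fun ω => norm_nonneg _
  have hω1 : ∀ ω : sphere (0 : E) 1, ‖(ω : E)‖ = 1 := fun ω => by simp
  rcases le_or_gt 3 ‖ξ‖ with hξ | hξ
  · calc _ ≤ ∫⁻ _ : sphere (0 : E) 1, 1 ∂σ := by
          refine lintegral_mono fun ω => ?_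
          rw [← ENNReal.ofReal_one]
          refine ENNReal.ofReal_le_ofReal ?_
          have h1 : |⟪(ω : E), ξ - (ω : E)⟫| ≤ D ω := by
            simpa [hω1] using abs_real_inner_le_norm (ω : E) (ξ - (ω : E))
          have h2 : 1 ≤ D ω := by
            have := norm_sub_norm_le ξ (ω : E)
            have h2 := hω1 ω
            simp only [D]; linarith
          change _ * (D ω ^ (j + 3))⁻¹ ≤ 1
          rw [← div_eq_mul_inv, div_le_one (by positivity)]
          exact h1.trans (le_self_pow₀ h2 (by omega))
      _ = ENNReal.ofReal S := by simp [hSσ]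
      _ ≤ _ := ENNReal.ofReal_le_ofReal (by
          have : 0 ≤ 2 * ((j + 3) * A) + ((j + 1) * A + (j + 1) * S) := by positivity
          linarith)
  · set δ := |‖ξ‖ - 1|
    have hδ0 : 0 ≤ δ := abs_nonneg _
    have hDδ : ∀ ω, δ ≤ D ω := fun ω => by
      have := abs_norm_sub_norm_le ξ (ω : E)
      rwa [hω1] at this
    have hnum : ∀ ω : sphere (0 : E) 1, |⟪(ω : E), ξ - (ω : E)⟫| ≤ 2 * δ + D ω ^ 2 := by
      intro ω
      have e1 : D ω ^ 2 = ‖ξ‖ ^ 2 - 2 * ⟪ξ, (ω : E)⟫ + 1 := by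
        simp only [D]; rw [norm_sub_sq_real, hω1]; ring
      have e2 : ⟪(ω : E), ξ - (ω : E)⟫ = (‖ξ‖ - 1) * (‖ξ‖ + 1) / 2 - D ω ^ 2 / 2 := by
        rw [inner_sub_right, real_inner_self_eq_norm_sq, hω1, real_inner_comm, e1]; ring
      rw [e2]
      have h3 : |(‖ξ‖ - 1) * (‖ξ‖ + 1) / 2| ≤ 2 * δ := by
        rw [abs_div, abs_mul, abs_of_pos (by positivity : 0 < ‖ξ‖ + 1)]
        simp only [Nat.abs_ofNat]
        change δ * _ / 2 ≤ _
        nlinarith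
      have h4 : |D ω ^ 2 / 2| ≤ D ω ^ 2 := by
        rw [abs_of_nonneg (by positivity)]; nlinarith [sq_nonneg (D ω)]
      exact (abs_sub _ _).trans (add_le_add h3 h4)
    have hsplit : ∀ ω : sphere (0 : E) 1,
        ENNReal.ofReal (|⟪(ω : E), ξ - (ω : E)⟫| * (D ω ^ (j + 3))⁻¹) ≤
        ENNReal.ofReal (2 * δ) * ENNReal.ofReal ((D ω ^ (j + 3))⁻¹) +
          ENNReal.ofReal ((D ω ^ (j + 1))⁻¹) := by
      intro ω
      have hD := hD0 ω
      rw [← ENNReal.ofReal_mul (by positivity),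
        ← ENNReal.ofReal_add (by positivity) (by positivity)]
      refine ENNReal.ofReal_le_ofReal ?_
      calc _ ≤ (2 * δ + D ω ^ 2) * (D ω ^ (j + 3))⁻¹ := by gcongr; exact hnum ω
        _ = 2 * δ * (D ω ^ (j + 3))⁻¹ + D ω ^ 2 * (D ω ^ (j + 3))⁻¹ := by ring
        _ ≤ _ := by
          rcases hD.eq_or_lt with h | h
          · simp [← h]
          · have : D ω ^ 2 * (D ω ^ (j + 3))⁻¹ = (D ω ^ (j + 1))⁻¹ := by
              rw [show j + 3 = 2 + (j + 1) by ring, pow_add]; field_simp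
            rw [this]
    have hI2 : ∫⁻ ω, ENNReal.ofReal ((D ω ^ (j + 1))⁻¹) ∂σ ≤
        ENNReal.ofReal ((j + 1) * A + (j + 1) * S) := by
      refine (lintegral_inv_pow_le hDm hD0 (m := j + 1) (by omega)).trans ?_
      rw [← Set.Ioc_union_Ioi_eq_Ioi (zero_le_one' ℝ),
        ENNReal.ofReal_add (by positivity) (by positivity)]
      refine (lintegral_union_le _ _ _).trans (add_le_add ?_ ?_)
      · calc _ ≤ ∫⁻ r in Set.Ioc (0 : ℝ) 1, ENNReal.ofReal ((j + 1) * A) := by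
              refine setLIntegral_mono measurable_const fun r hr => ?_
              have hr0 : 0 < r := hr.1
              refine (mul_le_mul_right (hcap ξ r hr.1) _).trans ?_
              rw [← ENNReal.ofReal_mul (by positivity)]
              refine ENNReal.ofReal_le_ofReal (le_of_eq ?_)
              push_cast; field_simp
          _ = _ := by simp
      · have hlt : (-((j : ℝ) + 2)) < -1 := by
          have := Nat.cast_nonneg (α := ℝ) j; linarith
        have hi := integrableOn_Ioi_rpow_of_lt hlt one_pos
        calc _ ≤ ∫⁻ r in Set.Ioi (1 : ℝ), ENNReal.ofReal ((j + 1) * S * r ^ (-((j : ℝ) + 2))) := by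
              refine setLIntegral_mono (by fun_prop) fun r hr => ?_
              have hr0 : 0 < r := one_pos.trans hr
              refine (mul_le_mul_right (measure_mono (Set.subset_univ _)) _).trans ?_
              rw [hSσ, ← ENNReal.ofReal_mul (by positivity)]
              refine ENNReal.ofReal_le_ofReal (le_of_eq ?_)
              rw [Real.rpow_neg hr0.le, show (j : ℝ) + 2 = ((j + 2 : ℕ) : ℝ) by push_cast; ring,
                Real.rpow_natCast]
              push_cast; ring
          _ = ENNReal.ofReal (∫ r in Set.Ioi (1 : ℝ), (j + 1) * S * r ^ (-((j : ℝ) + 2))) := by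
              rw [ofReal_integral_eq_lintegral_ofReal (hi.const_mul _)]
              filter_upwards [ae_restrict_mem measurableSet_Ioi] with r hr
              have hr0 : (0 : ℝ) < r := one_pos.trans hr
              positivity
          _ ≤ _ := by
              refine ENNReal.ofReal_le_ofReal ?_
              rw [integral_const_mul, integral_Ioi_rpow_of_lt hlt one_pos]
              simp only [Real.one_rpow]
              have hj0 : (0 : ℝ) ≤ j := Nat.cast_nonneg _
              have : -1 / (-((j : ℝ) + 2) + 1) ≤ 1 := by
                rw [show -((j : ℝ) + 2) + 1 = -(j + 1) by ring, neg_div_neg_eq,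
                  div_le_one (by positivity)]
                linarith
              exact mul_le_of_le_one_right (by positivity) this
    have hI1 : ENNReal.ofReal (2 * δ) * ∫⁻ ω, ENNReal.ofReal ((D ω ^ (j + 3))⁻¹) ∂σ ≤
        ENNReal.ofReal (2 * ((j + 3) * A)) := by
      rcases hδ0.eq_or_lt with h | hδ
      · simp [← h]
      have hlt : (-2 : ℝ) < -1 := by norm_num
      have hi := integrableOn_Ioi_rpow_of_lt hlt hδ
      have : ∫⁻ ω, ENNReal.ofReal ((D ω ^ (j + 3))⁻¹) ∂σ ≤ ENNReal.ofReal ((j + 3) * A * δ⁻¹) := by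
        refine (lintegral_inv_pow_le hDm hD0 (by omega)).trans ?_
        rw [← Set.Ioc_union_Ioi_eq_Ioi hδ0]
        refine (lintegral_union_le _ _ _).trans ?_
        have z : ∫⁻ r in Set.Ioc 0 δ, ENNReal.ofReal ((j + 3 : ℕ) * (r ^ (j + 3 + 1))⁻¹) *
            σ {ω | D ω < r} = 0 := by
          rw [setLIntegral_congr_fun (g := fun _ => 0) measurableSet_Ioc]
          · simp
          · intro r hr
            have : {ω | D ω < r} = ∅ := by
              ext ω
              simp only [Set.mem_ofPred_eq, Set.mem_empty_iff_false, iff_false, not_lt]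
              exact hr.2.trans (hDδ ω)
            simp [this]
        rw [z, zero_add]
        calc _ ≤ ∫⁻ r in Set.Ioi δ, ENNReal.ofReal ((j + 3) * A * r ^ (-2 : ℝ)) := by
              refine setLIntegral_mono (by fun_prop) fun r hr => ?_
              have hr0 : 0 < r := hδ.trans hr
              refine (mul_le_mul_right (hcap ξ r hr0) _).trans ?_
              rw [← ENNReal.ofReal_mul (by positivity)]
              refine ENNReal.ofReal_le_ofReal (le_of_eq ?_)
              rw [Real.rpow_neg hr0.le, Real.rpow_two, show j + 3 + 1 = (j + 2) + 2 by ring,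
                pow_add r (j + 2)]
              push_cast; field_simp
          _ = ENNReal.ofReal (∫ r in Set.Ioi δ, (j + 3) * A * r ^ (-2 : ℝ)) := by
              rw [ofReal_integral_eq_lintegral_ofReal (hi.const_mul _)]
              filter_upwards [ae_restrict_mem measurableSet_Ioi] with r hr
              have hr0 : (0 : ℝ) < r := hδ.trans hr
              positivity
          _ ≤ _ := by
              refine ENNReal.ofReal_le_ofReal (le_of_eq ?_)
              rw [integral_const_mul, integral_Ioi_rpow_of_lt hlt hδ]
              congr 1
              rw [show (-2 : ℝ) + 1 = -1 by norm_num, Real.rpow_neg_one]; ring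
      refine (mul_le_mul_right this _).trans ?_
      rw [← ENNReal.ofReal_mul (by positivity)]
      refine ENNReal.ofReal_le_ofReal (le_of_eq ?_)
      field_simp
    calc _ ≤ ∫⁻ ω, (ENNReal.ofReal (2 * δ) * ENNReal.ofReal ((D ω ^ (j + 3))⁻¹) +
          ENNReal.ofReal ((D ω ^ (j + 1))⁻¹)) ∂σ := lintegral_mono hsplit
      _ = ENNReal.ofReal (2 * δ) * ∫⁻ ω, ENNReal.ofReal ((D ω ^ (j + 3))⁻¹) ∂σ +
          ∫⁻ ω, ENNReal.ofReal ((D ω ^ (j + 1))⁻¹) ∂σ := by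
          rw [lintegral_add_left (by fun_prop), lintegral_const_mul _ (by fun_prop)]
      _ ≤ _ := add_le_add hI1 hI2
      _ ≤ _ := by
          rw [← ENNReal.ofReal_add (by positivity) (by positivity)]
          exact ENNReal.ofReal_le_ofReal (by linarith)

end DoubleLayer

section Plancherel

variable {E : Type*} [NormedAddCommGroup E] [InnerProductSpace ℝ E] [FiniteDimensional ℝ E]
  [MeasurableSpace E] [BorelSpace E]

open FourierTransform in
theorem continuous_fourier_of_integrable {f : E → ℂ} (hf : Integrable f) : Continuous (𝓕 f) :=
  VectorFourier.fourierIntegral_continuous Real.continuous_fourierChar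
    (by exact continuous_inner) hf

open FourierTransform SchwartzMap in
/-- The integral Fourier transform agrees with the `L²` Fourier transform on `L¹ ∩ L²`. -/
theorem fourier_ae_eq_fourier_toLp {f : E → ℂ} (hf : Integrable f) (hf2 : MemLp f 2) :
    𝓕 f =ᵐ[volume] (𝓕 (hf2.toLp f) : Lp ℂ 2 (volume : Measure E)) := by
  have hcont := continuous_fourier_of_integrable hf
  have hloc : LocallyIntegrable
      (𝓕 (hf2.toLp f) : Lp ℂ 2 (volume : Measure E)) volume :=
    (Lp.memLp _).locallyIntegrable one_le_two
  refine ae_eq_of_integral_contDiff_smul_eq hcont.locallyIntegrable hloc fun g hg hgc => ?_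
  have hgc' : HasCompactSupport (fun x => (g x : ℂ)) := hgc.comp_left (g := ofReal) ofReal_zero
  have hg' : ContDiff ℝ (⊤ : ℕ∞) (fun x => (g x : ℂ)) := ofRealCLM.contDiff.comp hg
  let G : 𝓢(E, ℂ) := hgc'.toSchwartzMap hg'
  have hGx : ∀ x, G x = (g x : ℂ) := fun x => rfl
  have h1 := congrArg (fun T : 𝓢'(E, ℂ) => T G) (Lp.fourier_toTemperedDistribution_eq (hf2.toLp f))
  simp only [TemperedDistribution.fourier_apply, Lp.toTemperedDistribution_apply] at h1
  have h2 : ∫ ξ, 𝓕 f ξ • G ξ = ∫ x, f x • 𝓕 (G : E → ℂ) x := by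
    have := VectorFourier.integral_fourierIntegral_smul_eq_flip (L := innerₗ E)
      (e := Real.fourierChar) (μ := volume) (ν := volume) (f := f) (g := G) Real.continuous_fourierChar
      (by exact continuous_inner) hf G.integrable
    rw [flip_innerₗ] at this
    exact this
  calc ∫ x, g x • 𝓕 f x = ∫ ξ, 𝓕 f ξ • G ξ := by
        congr 1; ext x; rw [hGx, Complex.real_smul, smul_eq_mul, mul_comm]
    _ = ∫ x, f x • 𝓕 (G : E → ℂ) x := h2
    _ = ∫ x, (𝓕 G) x • (hf2.toLp f) x := by
        refine integral_congr_ae ?_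
        filter_upwards [hf2.coeFn_toLp] with x hx
        rw [hx, SchwartzMap.fourier_coe, smul_eq_mul, smul_eq_mul, mul_comm]
    _ = _ := by
        rw [h1]
        congr 1

open FourierTransform in
/-- Plancherel's theorem on `L¹ ∩ L²`. -/
theorem eLpNorm_fourier_eq {f : E → ℂ} (hf : Integrable f) (hf2 : MemLp f 2) :
    eLpNorm (𝓕 f) 2 volume = eLpNorm f 2 volume := by
  rw [eLpNorm_congr_ae (fourier_ae_eq_fourier_toLp hf hf2)]
  have h := Lp.norm_fourier_eq (hf2.toLp f)
  rw [Lp.norm_def, Lp.norm_def, ENNReal.toReal_eq_toReal_iff' (Lp.eLpNorm_ne_top _)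
    (Lp.eLpNorm_ne_top _), eLpNorm_congr_ae hf2.coeFn_toLp] at h
  exact h

end Plancherel

section Multiplier

variable {E : Type*} [NormedAddCommGroup E] [InnerProductSpace ℝ E] [FiniteDimensional ℝ E]
  [MeasurableSpace E] [BorelSpace E]

theorem lintegral_enorm_mul_le_eLpNorm_two {F G : E → ℂ} (hF : AEStronglyMeasurable F)
    (hG : AEStronglyMeasurable G) :
    ∫⁻ ξ, ‖F ξ * G ξ‖ₑ ≤ eLpNorm F 2 volume * eLpNorm G 2 volume := by
  rw [← eLpNorm_one_eq_lintegral_enorm]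
  have h := eLpNorm_smul_le_mul_eLpNorm (𝕜 := ℂ) (E := ℂ) (p := 2) (q := 2) (r := 1) hG hF
  simpa only [smul_eq_mul, Pi.mul_def] using h

open FourierTransform in
/-- Convolution with the inverse Fourier transform of a bounded function is bounded on `L²`. -/
theorem norm_multiplier_form_le {k m f g : E → ℂ} (hm : Integrable m) {B : ℝ}
    (hB : ∀ ξ, ‖m ξ‖ ≤ B)
    (hk : ∀ x, k x = ∫ ξ, m ξ * cexp (2 * (π : ℂ) * I * ((⟪x, ξ⟫ : ℝ) : ℂ)))
    (hf : Integrable f) (hf2 : MemLp f 2) (hg : Integrable g) (hg2 : MemLp g 2) :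
    ‖∫ q : E × E, k (q.1 - q.2) * (f q.2 * g q.1)‖ ≤
      B * ((eLpNorm f 2 volume).toReal * (eLpNorm g 2 volume).toReal) := by
  have hB0 : 0 ≤ B := (norm_nonneg _).trans (hB 0)
  have hF := continuous_fourier_of_integrable hf
  have hG : Continuous fun ξ => 𝓕 g (-ξ) :=
    (continuous_fourier_of_integrable hg).comp continuous_neg
  have hGn : eLpNorm (fun ξ => 𝓕 g (-ξ)) 2 volume = eLpNorm g 2 volume := by
    rw [← eLpNorm_fourier_eq hg hg2]
    exact eLpNorm_comp_measurePreserving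
      (continuous_fourier_of_integrable hg).aestronglyMeasurable
      (Measure.measurePreserving_neg (volume : Measure E))
  have htriple : Integrable (fun r : (E × E) × E => (g r.1.1 * f r.1.2 * m r.2) *
      cexp (2 * (π : ℂ) * I * ((⟪r.1.1 - r.1.2, r.2⟫ : ℝ) : ℂ)))
      ((volume : Measure (E × E)).prod volume) := by
    refine Integrable.mul_bdd (c := 1) ((hg.mul_prod hf).mul_prod hm) ?_ ?_
    · exact Continuous.aestronglyMeasurable (by fun_prop)
    · exact Filter.Eventually.of_forall fun r => (norm_cexp_two_pi_I _).le
  have hswap : ∫ q : E × E, k (q.1 - q.2) * (f q.2 * g q.1) =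
      ∫ ξ, m ξ * (𝓕 f ξ * 𝓕 g (-ξ)) := by
    calc ∫ q : E × E, k (q.1 - q.2) * (f q.2 * g q.1)
        = ∫ q : E × E, ∫ ξ, (g q.1 * f q.2 * m ξ) *
          cexp (2 * (π : ℂ) * I * ((⟪q.1 - q.2, ξ⟫ : ℝ) : ℂ)) := by
          congr 1; ext q
          rw [hk, ← integral_mul_const]
          congr 1; ext ξ; ring
      _ = ∫ ξ, ∫ q : E × E, (g q.1 * f q.2 * m ξ) *
          cexp (2 * (π : ℂ) * I * ((⟪q.1 - q.2, ξ⟫ : ℝ) : ℂ)) := integral_integral_swap htriple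
      _ = _ := by
          congr 1; ext ξ
          rw [Real.fourier_eq', Real.fourier_eq', mul_comm (∫ v, _ • f v), Measure.volume_eq_prod,
            ← integral_prod_mul, ← integral_const_mul]
          congr 1; ext q
          have : cexp (2 * (π : ℂ) * I * ((⟪q.1 - q.2, ξ⟫ : ℝ) : ℂ)) =
              cexp (↑(-2 * π * ⟪q.1, -ξ⟫) * I) * cexp (↑(-2 * π * ⟪q.2, ξ⟫) * I) := by
            rw [← Complex.exp_add, inner_sub_left, inner_neg_right]
            congr 1; push_cast; ring
          rw [this, smul_eq_mul, smul_eq_mul]; ring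
  have hCS : ∫⁻ ξ, ‖𝓕 f ξ * 𝓕 g (-ξ)‖ₑ ≤ eLpNorm f 2 volume * eLpNorm g 2 volume := by
    rw [← hGn, ← eLpNorm_fourier_eq hf hf2]
    exact lintegral_enorm_mul_le_eLpNorm_two hF.aestronglyMeasurable hG.aestronglyMeasurable
  have hfin : eLpNorm f 2 volume * eLpNorm g 2 volume ≠ ⊤ :=
    ENNReal.mul_ne_top hf2.eLpNorm_ne_top hg2.eLpNorm_ne_top
  have hI : Integrable (fun ξ => 𝓕 f ξ * 𝓕 g (-ξ)) :=
    ⟨(hF.mul hG).aestronglyMeasurable, hCS.trans_lt hfin.lt_top⟩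
  rw [hswap]
  calc ‖∫ ξ, m ξ * (𝓕 f ξ * 𝓕 g (-ξ))‖ ≤ ∫ ξ, B * ‖𝓕 f ξ * 𝓕 g (-ξ)‖ := by
        refine norm_integral_le_of_norm_le (hI.norm.const_mul B)
          (Filter.Eventually.of_forall fun ξ => ?_)
        rw [norm_mul]
        exact mul_le_mul_of_nonneg_right (hB ξ) (norm_nonneg _)
    _ = B * ∫ ξ, ‖𝓕 f ξ * 𝓕 g (-ξ)‖ := integral_const_mul _ _
    _ ≤ _ := by
        rw [← ENNReal.toReal_mul, integral_norm_eq_lintegral_enorm hI.1]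
        exact mul_le_mul_of_nonneg_left (ENNReal.toReal_mono hfin hCS) hB0

end Multiplier

section Dipole

variable {E : Type*} [NormedAddCommGroup E] [InnerProductSpace ℝ E] [FiniteDimensional ℝ E]
  [MeasurableSpace E] [BorelSpace E]

theorem mul_exp_neg_mul_sq_le {b r : ℝ} (hb : 0 < b) :
    r * rexp (-b * r ^ 2) ≤ (√b)⁻¹ * rexp (-(b / 2) * r ^ 2) := by
  have hs : 0 < √b := Real.sqrt_pos.2 hb
  have hsq : √b ^ 2 = b := Real.sq_sqrt hb.le
  have h1 : √b * r ≤ rexp (b / 2 * r ^ 2) := by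
    have := Real.add_one_le_exp (b / 2 * r ^ 2)
    have h2 : b / 2 * r ^ 2 = (√b * r) ^ 2 / 2 := by rw [mul_pow, hsq]; ring
    nlinarith [sq_nonneg (√b * r - 1)]
  have h3 : rexp (-b * r ^ 2) = rexp (-(b / 2) * r ^ 2) * (rexp (b / 2 * r ^ 2))⁻¹ := by
    rw [← Real.exp_neg, ← Real.exp_add]; congr 1; ring
  have hp := Real.exp_pos (b / 2 * r ^ 2)
  have h4 : r ≤ (√b)⁻¹ * rexp (b / 2 * r ^ 2) := by
    rw [inv_mul_eq_div, le_div_iff₀ hs]; linarith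
  calc r * rexp (-b * r ^ 2) ≤ ((√b)⁻¹ * rexp (b / 2 * r ^ 2)) * rexp (-b * r ^ 2) := by gcongr
    _ = _ := by rw [h3]; field_simp

theorem integrable_exp_neg_mul_sq_norm {b : ℝ} (hb : 0 < b) :
    Integrable fun v : E => rexp (-b * ‖v‖ ^ 2) := by
  have h := (GaussianFourier.integrable_cexp_neg_mul_sq_norm_add (V := E) (b := (b : ℂ))
    (by simpa using hb) 0 0).norm
  refine h.congr (Filter.Eventually.of_forall fun v => ?_)
  simp only [zero_mul, add_zero]
  rw [← ofReal_pow, ← ofReal_neg, ← ofReal_mul, Complex.norm_exp_ofReal]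

theorem integrable_inner_mul_exp_neg_mul_sq_norm {b : ℝ} (hb : 0 < b) (ω : E) :
    Integrable fun v : E => ⟪ω, v⟫ * rexp (-b * ‖v‖ ^ 2) := by
  refine Integrable.mono' (((integrable_exp_neg_mul_sq_norm (E := E) (half_pos hb)).const_mul
    (‖ω‖ * (√b)⁻¹))) (Continuous.aestronglyMeasurable (by fun_prop))
    (Filter.Eventually.of_forall fun v => ?_)
  rw [norm_mul, Real.norm_of_nonneg (Real.exp_pos _).le, mul_assoc]
  calc ‖⟪ω, v⟫‖ * rexp (-b * ‖v‖ ^ 2) ≤ (‖ω‖ * ‖v‖) * rexp (-b * ‖v‖ ^ 2) := by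
        gcongr; exact abs_real_inner_le_norm _ _
    _ = ‖ω‖ * (‖v‖ * rexp (-b * ‖v‖ ^ 2)) := by ring
    _ ≤ _ := mul_le_mul_of_nonneg_left (mul_exp_neg_mul_sq_le hb) (norm_nonneg _)

/-- Fourier transform of the derivative of a Gaussian. -/
theorem integral_inner_mul_gaussian_mul_cexp {b : ℝ} (hb : 0 < b) (ω x : E) :
    ∫ v : E, ((2 * b * (⟪ω, v⟫ * rexp (-b * ‖v‖ ^ 2)) : ℝ) : ℂ) *
        cexp (2 * (π : ℂ) * I * ((⟪x, v⟫ : ℝ) : ℂ)) =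
      2 * (π : ℂ) * I * ((⟪x, ω⟫ : ℝ) : ℂ) *
        (((π / b) ^ ((Module.finrank ℝ E : ℝ) / 2) * rexp (-(π ^ 2 * ‖x‖ ^ 2 / b)) : ℝ) : ℂ) := by
  have hbdd : ∀ {φ : E → ℝ}, Integrable φ → Integrable fun v => (φ v : ℂ) *
      cexp (2 * (π : ℂ) * I * ((⟪x, v⟫ : ℝ) : ℂ)) := fun hφ => by
    refine Integrable.mul_bdd (c := 1) hφ.ofReal (Continuous.aestronglyMeasurable (by fun_prop)) ?_
    exact Filter.Eventually.of_forall fun r => (norm_cexp_two_pi_I _).le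
  have hg0 := integrable_exp_neg_mul_sq_norm (E := E) hb
  have hg1 := (integrable_inner_mul_exp_neg_mul_sq_norm hb ω).const_mul (2 * b)
  have hval : ∫ v : E, (rexp (-b * ‖v‖ ^ 2) : ℂ) * cexp (2 * (π : ℂ) * I * ((⟪x, v⟫ : ℝ) : ℂ)) =
      (((π / b) ^ ((Module.finrank ℝ E : ℝ) / 2) * rexp (-(π ^ 2 * ‖x‖ ^ 2 / b)) : ℝ) : ℂ) := by
    have h := GaussianFourier.integral_cexp_neg_mul_sq_norm_add (V := E) (b := (b : ℂ))
      (by simpa using hb) (2 * (π : ℂ) * I) x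
    rw [show (fun v : E => (rexp (-b * ‖v‖ ^ 2) : ℂ) *
      cexp (2 * (π : ℂ) * I * ((⟪x, v⟫ : ℝ) : ℂ))) = fun v : E =>
        cexp (-(b : ℂ) * ‖v‖ ^ 2 + 2 * (π : ℂ) * I * ((⟪x, v⟫ : ℝ) : ℂ)) from ?_, h]
    · rw [ofReal_mul, ofReal_cpow (by positivity), ofReal_exp]
      push_cast
      congr 2
      have : (b : ℂ) ≠ 0 := by exact_mod_cast hb.ne'
      field_simp
      rw [Complex.I_sq]; ring
    · ext v
      rw [Complex.exp_add, ofReal_exp]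
      push_cast; rfl
  have hparts := integral_bilinear_hasLineDerivAt_right_eq_neg_left_of_integrable
    (μ := (volume : Measure E)) (B := ContinuousLinearMap.mul ℝ ℂ) (v := ω)
    (f := fun v : E => (rexp (-b * ‖v‖ ^ 2) : ℂ))
    (f' := fun v : E => ((-(2 * b * (⟪ω, v⟫ * rexp (-b * ‖v‖ ^ 2))) : ℝ) : ℂ))
    (g := fun v : E => cexp (2 * (π : ℂ) * I * ((⟪x, v⟫ : ℝ) : ℂ)))
    (g' := fun v : E => (2 * (π : ℂ) * I * ((⟪x, ω⟫ : ℝ) : ℂ)) *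
      cexp (2 * (π : ℂ) * I * ((⟪x, v⟫ : ℝ) : ℂ))) ?_ ?_ ?_ ?_ ?_
  · simp only [ContinuousLinearMap.mul_apply'] at hparts
    rw [← hval, ← integral_const_mul]
    calc _ = -∫ v : E, ((-(2 * b * (⟪ω, v⟫ * rexp (-b * ‖v‖ ^ 2))) : ℝ) : ℂ) *
          cexp (2 * (π : ℂ) * I * ((⟪x, v⟫ : ℝ) : ℂ)) := by
          rw [← integral_neg]; congr 1; ext v; rw [ofReal_neg]; ring
      _ = _ := hparts.symm
      _ = _ := by congr 1; ext v; ring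
  · exact hbdd hg1.neg
  · simp only [ContinuousLinearMap.mul_apply']
    refine ((hbdd hg0).const_mul (2 * (π : ℂ) * I * ((⟪x, ω⟫ : ℝ) : ℂ))).congr
      (Filter.Eventually.of_forall fun v => ?_)
    simp only; ring
  · exact hbdd hg0
  · intro v _
    have h1 : HasDerivAt (fun s : ℝ => ‖v + s • ω‖ ^ 2) (2 * ⟪v, ω⟫) 0 := by
      have hl : HasDerivAt (fun s : ℝ => v + s • ω) ω 0 := by
        simpa using ((hasDerivAt_id (0 : ℝ)).smul_const ω).const_add v
      simpa using hl.norm_sq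
    have h2 := ((h1.const_mul (-b)).exp).ofReal_comp
    have h3 : ((rexp (-b * ‖v + (0 : ℝ) • ω‖ ^ 2) * (-b * (2 * ⟪v, ω⟫)) : ℝ) : ℂ) =
        ((-(2 * b * (⟪ω, v⟫ * rexp (-b * ‖v‖ ^ 2))) : ℝ) : ℂ) := by
      rw [real_inner_comm v ω, zero_smul, add_zero]
      push_cast
      ring
    rw [h3] at h2
    exact h2
  · intro v _
    have hl : HasDerivAt (fun s : ℝ => (⟪x, v + s • ω⟫ : ℝ)) ⟪x, ω⟫ 0 := by
      simp only [inner_add_right, real_inner_smul_right]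
      simpa using ((hasDerivAt_id (0 : ℝ)).mul_const ⟪x, ω⟫).const_add ⟪x, v⟫
    have h2 := (hl.ofReal_comp.const_mul (2 * (π : ℂ) * I)).cexp
    rw [zero_smul, add_zero, mul_comm (cexp _)] at h2
    exact h2

/-- The derivative of the heat kernel in the direction `ω`, centred at `ω`. -/
def heatDipole (t : ℝ) (ω ξ : E) : ℝ :=
  (π / t) ^ ((Module.finrank ℝ E : ℝ) / 2) *
    (2 * (π ^ 2 / t) * (⟪ω, ξ - ω⟫ * rexp (-(π ^ 2 / t) * ‖ξ - ω‖ ^ 2)))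

theorem measurable_heatDipole : Measurable fun q : (ℝ × E) × E => heatDipole q.1.1 q.1.2 q.2 := by
  unfold heatDipole
  fun_prop

theorem norm_heatDipole {t : ℝ} (ht : 0 < t) (ω ξ : E) :
    ‖heatDipole t ω ξ‖ = (π / t) ^ ((Module.finrank ℝ E : ℝ) / 2) *
      (2 * (π ^ 2 / t) * (|⟪ω, ξ - ω⟫| * rexp (-(π ^ 2 / t) * ‖ξ - ω‖ ^ 2))) := by
  rw [heatDipole, Real.norm_eq_abs, abs_mul, abs_mul, abs_mul ⟪ω, ξ - ω⟫,
    abs_of_nonneg (by positivity : (0 : ℝ) ≤ (π / t) ^ ((Module.finrank ℝ E : ℝ) / 2)),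
    abs_of_nonneg (by positivity : (0 : ℝ) ≤ 2 * (π ^ 2 / t)), Real.abs_exp]

theorem integral_heatDipole_mul_cexp {t : ℝ} (ht : 0 < t) (ω x : E) :
    ∫ ξ, (heatDipole t ω ξ : ℂ) * cexp (2 * (π : ℂ) * I * ((⟪x, ξ⟫ : ℝ) : ℂ)) =
      (rexp (-t * ‖x‖ ^ 2) : ℂ) * (2 * (π : ℂ) * I * ((⟪x, ω⟫ : ℝ) : ℂ) *
        cexp (2 * (π : ℂ) * I * ((⟪x, ω⟫ : ℝ) : ℂ))) := by
  have h := integral_inner_mul_gaussian_mul_cexp (b := π ^ 2 / t) (by positivity) ω x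
  have hsub := integral_sub_right_eq_self (μ := (volume : Measure E))
    (fun v => (heatDipole t ω (v + ω) : ℂ) * cexp (2 * (π : ℂ) * I * ((⟪x, v + ω⟫ : ℝ) : ℂ))) ω
  simp only [sub_add_cancel] at hsub
  rw [hsub]
  have he : ∀ v : E, (heatDipole t ω (v + ω) : ℂ) *
      cexp (2 * (π : ℂ) * I * ((⟪x, v + ω⟫ : ℝ) : ℂ)) =
      (((π / t) ^ ((Module.finrank ℝ E : ℝ) / 2) : ℝ) *
        cexp (2 * (π : ℂ) * I * ((⟪x, ω⟫ : ℝ) : ℂ))) *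
      (((2 * (π ^ 2 / t) * (⟪ω, v⟫ * rexp (-(π ^ 2 / t) * ‖v‖ ^ 2)) : ℝ) : ℂ) *
        cexp (2 * (π : ℂ) * I * ((⟪x, v⟫ : ℝ) : ℂ))) := by
    intro v
    rw [heatDipole, inner_add_right, ofReal_add, mul_add, Complex.exp_add, ofReal_mul]
    simp only [add_sub_cancel_right]
    ring
  simp_rw [he]
  rw [integral_const_mul, h]
  have h1 : (π / t) ^ ((Module.finrank ℝ E : ℝ) / 2) *
      (π / (π ^ 2 / t)) ^ ((Module.finrank ℝ E : ℝ) / 2) = 1 := by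
    rw [← Real.mul_rpow (by positivity) (by positivity)]
    rw [show π / t * (π / (π ^ 2 / t)) = 1 by field_simp, Real.one_rpow]
  have h2 : π ^ 2 * ‖x‖ ^ 2 / (π ^ 2 / t) = t * ‖x‖ ^ 2 := by field_simp
  rw [h2, ofReal_mul, ← neg_mul]
  have h1' : (((π / t) ^ ((Module.finrank ℝ E : ℝ) / 2) : ℝ) : ℂ) *
      (((π / (π ^ 2 / t)) ^ ((Module.finrank ℝ E : ℝ) / 2) : ℝ) : ℂ) = 1 := by
    rw [← ofReal_mul, h1, ofReal_one]
  linear_combination (2 * (π : ℂ) * I * ((⟪x, ω⟫ : ℝ) : ℂ) * (rexp (-t * ‖x‖ ^ 2) : ℂ) *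
    cexp (2 * (π : ℂ) * I * ((⟪x, ω⟫ : ℝ) : ℂ))) * h1'

theorem lintegral_heatDipole_le {t : ℝ} (ht : 0 < t) {ω : E} (hω : ‖ω‖ = 1) :
    ∫⁻ ξ, ‖heatDipole t ω ξ‖ₑ ≤
      ENNReal.ofReal (2 * π * 2 ^ ((Module.finrank ℝ E : ℝ) / 2) * t ^ (-(1 / 2) : ℝ)) := by
  set s := (Module.finrank ℝ E : ℝ) / 2 with hs
  have hb : 0 < π ^ 2 / t := by positivity
  have hgi := ((integrable_exp_neg_mul_sq_norm (E := E) (half_pos hb)).const_mul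
    ((π / t) ^ s * (2 * √(π ^ 2 / t)))).comp_sub_right ω
  have hsb : 0 < √(π ^ 2 / t) := Real.sqrt_pos.2 hb
  calc ∫⁻ ξ, ‖heatDipole t ω ξ‖ₑ ≤ ∫⁻ ξ, ENNReal.ofReal ((π / t) ^ s * (2 * √(π ^ 2 / t)) *
        rexp (-(π ^ 2 / t / 2) * ‖ξ - ω‖ ^ 2)) := by
        refine lintegral_mono fun ξ => ?_
        rw [← ofReal_norm]
        refine ENNReal.ofReal_le_ofReal ?_
        rw [norm_heatDipole ht, ← hs, mul_assoc ((π / t) ^ s) (2 * √(π ^ 2 / t))]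
        refine mul_le_mul_of_nonneg_left ?_ (by positivity : (0 : ℝ) ≤ (π / t) ^ s)
        calc 2 * (π ^ 2 / t) * (|⟪ω, ξ - ω⟫| * rexp (-(π ^ 2 / t) * ‖ξ - ω‖ ^ 2))
            ≤ 2 * (π ^ 2 / t) * (‖ξ - ω‖ * rexp (-(π ^ 2 / t) * ‖ξ - ω‖ ^ 2)) := by
              gcongr
              simpa [hω] using abs_real_inner_le_norm ω (ξ - ω)
          _ ≤ 2 * (π ^ 2 / t) * ((√(π ^ 2 / t))⁻¹ *
              rexp (-(π ^ 2 / t / 2) * ‖ξ - ω‖ ^ 2)) := by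
              exact mul_le_mul_of_nonneg_left (mul_exp_neg_mul_sq_le hb) (by positivity)
          _ = 2 * ((√(π ^ 2 / t)) ^ 2) * ((√(π ^ 2 / t))⁻¹ *
              rexp (-(π ^ 2 / t / 2) * ‖ξ - ω‖ ^ 2)) := by rw [Real.sq_sqrt hb.le]
          _ = _ := by field_simp
    _ = ENNReal.ofReal (∫ ξ, (π / t) ^ s * (2 * √(π ^ 2 / t)) *
        rexp (-(π ^ 2 / t / 2) * ‖ξ - ω‖ ^ 2)) := by
        rw [ofReal_integral_eq_lintegral_ofReal hgi]
        exact Filter.Eventually.of_forall fun ξ => by positivity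
    _ = _ := by
        rw [integral_sub_right_eq_self (fun v : E => (π / t) ^ s * (2 * √(π ^ 2 / t)) *
          rexp (-(π ^ 2 / t / 2) * ‖v‖ ^ 2)), integral_const_mul,
          GaussianFourier.integral_rexp_neg_mul_sq_norm (half_pos hb)]
        congr 1
        have h1 : (π / t) ^ s * (π / (π ^ 2 / t / 2)) ^ s = 2 ^ s := by
          rw [← Real.mul_rpow (by positivity) (by positivity)]
          congr 1; field_simp
        have h2 : √(π ^ 2 / t) = π * t ^ (-(1 / 2) : ℝ) := by
          rw [Real.sqrt_div (by positivity), Real.sqrt_sq Real.pi_pos.le, Real.rpow_neg ht.le,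
            ← Real.sqrt_eq_rpow]
          rfl
        rw [h2, ← h1]; ring

theorem lintegral_rpow_mul_exp_neg_div {s a : ℝ} (hs : 0 < s) (ha : 0 < a) :
    ∫⁻ t in Set.Ioi (0 : ℝ), ENNReal.ofReal (t ^ (-s - 1) * rexp (-(a / t))) =
      ENNReal.ofReal ((1 / a) ^ s * Real.Gamma s) := by
  have h1 := integral_comp_rpow_Ioi (fun u : ℝ => u ^ (s - 1) * rexp (-(a * u)))
    (p := -1) (by norm_num)
  rw [Real.integral_rpow_mul_exp_neg_mul_Ioi hs ha] at h1
  have h2 : ∫ t in Set.Ioi (0 : ℝ), t ^ (-s - 1) * rexp (-(a / t)) =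
      (1 / a) ^ s * Real.Gamma s := by
    rw [← h1]
    refine setIntegral_congr_fun measurableSet_Ioi fun t ht => ?_
    have ht0 : (0 : ℝ) < t := ht
    simp only [smul_eq_mul, abs_neg, abs_one, one_mul]
    rw [← Real.rpow_mul ht0.le, ← mul_assoc, ← Real.rpow_add ht0, Real.rpow_neg_one,
      ← div_eq_mul_inv]
    congr 2; ring
  have hG := Real.Gamma_pos_of_pos hs
  have h3 : IntegrableOn (fun t : ℝ => t ^ (-s - 1) * rexp (-(a / t))) (Set.Ioi 0) := by
    refine not_imp_comm.1 integral_undef ?_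
    rw [h2]; positivity
  rw [← h2, ofReal_integral_eq_lintegral_ofReal h3]
  filter_upwards [ae_restrict_mem measurableSet_Ioi] with t ht
  have ht0 : (0 : ℝ) < t := ht
  positivity

theorem exists_lintegral_heatDipole_time_le (hd : 0 < Module.finrank ℝ E) :
    ∃ C, 0 ≤ C ∧ ∀ ω ξ : E, ∫⁻ t in Set.Ioi (0 : ℝ), ‖heatDipole t ω ξ‖ₑ ≤
      ENNReal.ofReal (C * (|⟪ω, ξ - ω⟫| * (‖ξ - ω‖ ^ Module.finrank ℝ E)⁻¹)) := by
  set s := (Module.finrank ℝ E : ℝ) / 2 with hs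
  have hs0 : 0 < s := by positivity
  have hG := Real.Gamma_pos_of_pos hs0
  refine ⟨π ^ s * (2 * π ^ 2) * ((1 / π ^ 2) ^ s * Real.Gamma s), by positivity, fun ω ξ => ?_⟩
  rcases (norm_nonneg (ξ - ω)).eq_or_lt with h0 | h0
  · have : ξ - ω = 0 := norm_eq_zero.1 h0.symm
    simp [heatDipole, this]
  · have hpt : ∀ t ∈ Set.Ioi (0 : ℝ), ‖heatDipole t ω ξ‖ₑ =
        ENNReal.ofReal (π ^ s * (2 * π ^ 2) * |⟪ω, ξ - ω⟫|) *
        ENNReal.ofReal (t ^ (-s - 1) * rexp (-(π ^ 2 * ‖ξ - ω‖ ^ 2 / t))) := by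
      intro t ht
      have ht0 : (0 : ℝ) < t := ht
      rw [← ofReal_norm, ← ENNReal.ofReal_mul (by positivity)]
      congr 1
      rw [norm_heatDipole ht0, ← hs, Real.div_rpow Real.pi_pos.le ht0.le, Real.rpow_sub ht0,
        Real.rpow_neg ht0.le, Real.rpow_one]
      rw [show -(π ^ 2 / t) * ‖ξ - ω‖ ^ 2 = -(π ^ 2 * ‖ξ - ω‖ ^ 2 / t) by ring]
      field_simp
    rw [setLIntegral_congr_fun measurableSet_Ioi hpt, lintegral_const_mul _ (by fun_prop),
      lintegral_rpow_mul_exp_neg_div hs0 (by positivity), ← ENNReal.ofReal_mul (by positivity)]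
    refine ENNReal.ofReal_le_ofReal (le_of_eq ?_)
    have h1 : (1 / (π ^ 2 * ‖ξ - ω‖ ^ 2)) ^ s =
        (1 / π ^ 2) ^ s * (‖ξ - ω‖ ^ Module.finrank ℝ E)⁻¹ := by
      rw [show 1 / (π ^ 2 * ‖ξ - ω‖ ^ 2) = (1 / π ^ 2) * (‖ξ - ω‖ ^ 2)⁻¹ by field_simp,
        Real.mul_rpow (by positivity) (by positivity), Real.inv_rpow (by positivity),
        ← Real.rpow_natCast ‖ξ - ω‖ 2, ← Real.rpow_mul h0.le, ← Real.rpow_natCast ‖ξ - ω‖,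
        show ((2 : ℕ) : ℝ) * s = Module.finrank ℝ E by rw [hs]; push_cast; ring]
    rw [h1]; ring

end Dipole

section Subordination

variable {E : Type*} [NormedAddCommGroup E] [InnerProductSpace ℝ E] [FiniteDimensional ℝ E]
  [MeasurableSpace E] [BorelSpace E]

set_option maxHeartbeats 1000000 in
/-- After damping by `(1 + ‖x‖²) ^ (-w)` with `Re w = 1`, the kernel `x · ∇K` is, up to a Gamma
factor, the inverse Fourier transform of a bounded function. -/
theorem exists_bounded_multiplier (hn : 3 ≤ Module.finrank ℝ E) :
    ∃ B : ℝ, 0 ≤ B ∧ ∀ w : ℂ, w.re = 1 → ∃ m : E → ℂ, Integrable m ∧ (∀ ξ, ‖m ξ‖ ≤ B) ∧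
      ∀ x : E, Complex.Gamma w * (eulerKernel x * ((1 + ‖x‖ ^ 2 : ℝ) : ℂ) ^ (-w)) =
        ∫ ξ, m ξ * cexp (2 * (π : ℂ) * I * ((⟪x, ξ⟫ : ℝ) : ℂ)) := by
  obtain ⟨C₁, hC₁, hdl⟩ := exists_double_layer_le (E := E) hn
  obtain ⟨C₂, hC₂, htime⟩ := exists_lintegral_heatDipole_time_le (E := E) (by omega)
  refine ⟨C₂ * C₁, by positivity, fun w hw => ?_⟩
  set σ := (volume : Measure E).toSphere
  let μ : Measure (ℝ × sphere (0 : E) 1) := (volume.restrict (Set.Ioi (0 : ℝ))).prod σ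
  let c : ℝ → ℂ := fun t => (t : ℂ) ^ (w - 1) * (rexp (-t) : ℂ)
  let P : (ℝ × sphere (0 : E) 1) → E → ℂ := fun a ξ => c a.1 * (heatDipole a.1 (a.2 : E) ξ : ℂ)
  have hcm : Measurable c := by
    refine Measurable.mul ?_ (by fun_prop)
    exact (measurable_ofReal).pow_const _
  have hcn : ∀ t ∈ Set.Ioi (0 : ℝ), ‖c t‖ₑ = ENNReal.ofReal (rexp (-t)) := by
    intro t ht
    rw [← ofReal_norm, norm_mul, norm_cpow_eq_rpow_re_of_pos ht, norm_real,
      Real.norm_of_nonneg (Real.exp_pos _).le]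
    simp [hw]
  have hPm : Measurable fun q : (ℝ × sphere (0 : E) 1) × E => P q.1 q.2 := by
    refine (hcm.comp measurable_fst.fst).mul (measurable_ofReal.comp ?_)
    exact measurable_heatDipole.comp (by fun_prop :
      Measurable fun q : (ℝ × sphere (0 : E) 1) × E => ((q.1.1, (q.1.2 : E)), q.2))
  have hfin : ∫⁻ q, ‖P q.1 q.2‖ₑ ∂(μ.prod volume) < ⊤ := by
    rw [lintegral_prod _ hPm.enorm.aemeasurable, lintegral_prod _
      (hPm.enorm.lintegral_prod_right').aemeasurable]
    set A : ℝ := 2 * π * 2 ^ ((Module.finrank ℝ E : ℝ) / 2) with hA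
    have hA0 : 0 ≤ A := by positivity
    calc _ ≤ ∫⁻ t in Set.Ioi (0 : ℝ), ENNReal.ofReal (A * (rexp (-t) * t ^ ((1 / 2 : ℝ) - 1))) *
          σ Set.univ := by
          refine setLIntegral_mono (by fun_prop) fun t ht => ?_
          rw [← lintegral_const]
          refine lintegral_mono fun ω => ?_
          have ht0 : (0 : ℝ) < t := ht
          simp only [P, enorm_mul, hcn t ht]
          rw [lintegral_const_mul' _ _ ENNReal.ofReal_ne_top]
          have h1 := lintegral_heatDipole_le ht0 (ω := (ω : E)) (by simp)
          calc _ ≤ ENNReal.ofReal (rexp (-t)) * ENNReal.ofReal (A * t ^ (-(1 / 2) : ℝ)) := by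
                refine mul_le_mul_right (le_trans (le_of_eq ?_) h1) _
                refine lintegral_congr fun ξ => ?_
                rw [← ofReal_norm, norm_real, ofReal_norm]
            _ = _ := by
                rw [← ENNReal.ofReal_mul (by positivity)]
                congr 1
                rw [show (1 / 2 : ℝ) - 1 = -(1 / 2) by norm_num]; ring
      _ < ⊤ := by
          rw [lintegral_mul_const _ (by fun_prop)]
          refine ENNReal.mul_lt_top ?_ (measure_lt_top _ _)
          exact ((Real.GammaIntegral_convergent (s := 1 / 2) (by norm_num)).const_mul
            A).lintegral_lt_top
  have hInt : Integrable (fun q : (ℝ × sphere (0 : E) 1) × E => P q.1 q.2) (μ.prod volume) :=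
    ⟨hPm.aestronglyMeasurable, hfin⟩
  refine ⟨fun ξ => ∫ a, P a ξ ∂μ, hInt.integral_prod_right, fun ξ => ?_, fun x => ?_⟩
  · have h1 : ∫⁻ a, ‖P a ξ‖ₑ ∂μ ≤ ENNReal.ofReal (C₂ * C₁) := by
      have hPξ : Measurable fun a => P a ξ := hPm.comp measurable_prodMk_right
      rw [lintegral_prod_symm _ hPξ.enorm.aemeasurable]
      calc _ ≤ ∫⁻ ω, ENNReal.ofReal C₂ * ENNReal.ofReal (|⟪(ω : E), ξ - ω⟫| *
            (‖ξ - (ω : E)‖ ^ Module.finrank ℝ E)⁻¹) ∂σ := by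
            refine lintegral_mono fun ω => ?_
            rw [← ENNReal.ofReal_mul hC₂]
            refine le_trans ?_ (htime (ω : E) ξ)
            refine setLIntegral_mono' measurableSet_Ioi fun t ht => ?_
            simp only [P, enorm_mul, hcn t ht]
            have ht0 : (0 : ℝ) < t := ht
            have : ENNReal.ofReal (rexp (-t)) ≤ 1 := by
              rw [ENNReal.ofReal_le_one]; exact Real.exp_le_one_iff.2 (by linarith)
            calc _ ≤ 1 * ‖(heatDipole t (ω : E) ξ : ℂ)‖ₑ := mul_le_mul_left this _
              _ = _ := by rw [one_mul, ← ofReal_norm, norm_real, ofReal_norm]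
        _ ≤ ENNReal.ofReal C₂ * ENNReal.ofReal C₁ := by
            rw [lintegral_const_mul' _ _ ENNReal.ofReal_ne_top]
            exact mul_le_mul_right (hdl ξ) _
        _ = _ := (ENNReal.ofReal_mul hC₂).symm
    have h2 := (enorm_integral_le_lintegral_enorm (μ := μ) fun a => P a ξ).trans h1
    rw [← ofReal_norm] at h2
    exact (ENNReal.ofReal_le_ofReal_iff (by positivity)).1 h2
  · have hr : 0 < 1 + ‖x‖ ^ 2 := by positivity
    have hexp : Integrable (fun q : (ℝ × sphere (0 : E) 1) × E => P q.1 q.2 *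
        cexp (2 * (π : ℂ) * I * ((⟪x, q.2⟫ : ℝ) : ℂ))) (μ.prod volume) := by
      refine Integrable.mul_bdd (c := 1) hInt (Continuous.aestronglyMeasurable (by fun_prop)) ?_
      exact Filter.Eventually.of_forall fun r => (norm_cexp_two_pi_I _).le
    have hGam := Complex.integral_cpow_mul_exp_neg_mul_Ioi (a := w) (r := 1 + ‖x‖ ^ 2)
      (by rw [hw]; exact one_pos) hr
    have hpow : (1 / ((1 + ‖x‖ ^ 2 : ℝ) : ℂ)) ^ w = ((1 + ‖x‖ ^ 2 : ℝ) : ℂ) ^ (-w) := by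
      rw [one_div, inv_cpow _ _ (by rw [arg_ofReal_of_nonneg hr.le]; exact Real.pi_pos.ne),
        cpow_neg]
    symm
    calc ∫ ξ, (∫ a, P a ξ ∂μ) * cexp (2 * (π : ℂ) * I * ((⟪x, ξ⟫ : ℝ) : ℂ))
        = ∫ ξ, ∫ a, P a ξ * cexp (2 * (π : ℂ) * I * ((⟪x, ξ⟫ : ℝ) : ℂ)) ∂μ := by
          congr 1; ext ξ; rw [integral_mul_const]
      _ = ∫ a, (∫ ξ, P a ξ * cexp (2 * (π : ℂ) * I * ((⟪x, ξ⟫ : ℝ) : ℂ))) ∂μ :=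
          (integral_integral_swap hexp).symm
      _ = ∫ a, ((a.1 : ℂ) ^ (w - 1) * cexp (-(((1 + ‖x‖ ^ 2 : ℝ) : ℂ)) * a.1)) *
            ((2 * (π : ℂ) * I * ((⟪x, (a.2 : E)⟫ : ℝ) : ℂ)) *
              cexp (2 * (π : ℂ) * I * ((⟪x, (a.2 : E)⟫ : ℝ) : ℂ))) ∂μ := by
          refine integral_congr_ae ?_
          have hae : ∀ᵐ a ∂μ, a.1 ∈ Set.Ioi (0 : ℝ) :=
            Measure.quasiMeasurePreserving_fst.ae (ae_restrict_mem measurableSet_Ioi)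
          filter_upwards [hae] with a ha
          simp only [P, mul_assoc (c a.1)]
          rw [integral_const_mul, integral_heatDipole_mul_cexp ha, ← mul_assoc]
          congr 1
          simp only [c]
          rw [mul_assoc]
          congr 1
          push_cast
          rw [← Complex.exp_add]
          congr 1; ring
      _ = (∫ t in Set.Ioi (0 : ℝ), (t : ℂ) ^ (w - 1) * cexp (-(((1 + ‖x‖ ^ 2 : ℝ) : ℂ)) * t)) *
            eulerKernel x := by
          exact integral_prod_mul (μ := volume.restrict (Set.Ioi (0 : ℝ))) (ν := σ)
            (fun t : ℝ => (t : ℂ) ^ (w - 1) * cexp (-(((1 + ‖x‖ ^ 2 : ℝ) : ℂ)) * t))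
            (fun ω : sphere (0 : E) 1 => (2 * (π : ℂ) * I * ((⟪x, (ω : E)⟫ : ℝ) : ℂ)) *
              cexp (2 * (π : ℂ) * I * ((⟪x, (ω : E)⟫ : ℝ) : ℂ)))
      _ = _ := by
          rw [← hpow]
          simp only [neg_mul] at hGam ⊢
          rw [hGam]; ring

end Subordination

section ThreeLines

theorem Real.sinh_le_mul_exp {u : ℝ} : Real.sinh u ≤ u * rexp u := by
  rw [Real.sinh_eq]
  have h1 := Real.add_one_le_exp (-2 * u)
  have h2 : rexp (-u) = rexp u * rexp (-2 * u) := by rw [← Real.exp_add]; congr 1; ring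
  rw [h2]
  nlinarith [Real.exp_pos u]

/-- Lower bound for the Gamma function on the line `Re w = 1`. -/
theorem one_le_norm_Gamma_one_add_mul_I (s : ℝ) :
    1 ≤ ‖Complex.Gamma (1 + s * I)‖ * rexp (π * |s|) := by
  rcases eq_or_ne s 0 with rfl | hs
  · simp
  have hsI : (s : ℂ) * I ≠ 0 := mul_ne_zero (by exact_mod_cast hs) I_ne_zero
  have h1 : Complex.Gamma (1 + s * I) * Complex.Gamma (1 - s * I) * Complex.sin (π * (s * I)) =
      s * I * π := by
    have hsin : Complex.sin (π * (s * I)) ≠ 0 := by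
      rw [← mul_assoc, ← ofReal_mul, Complex.sin_mul_I, ← ofReal_sinh]
      refine mul_ne_zero (ofReal_ne_zero.2 ?_) I_ne_zero
      rw [Ne, Real.sinh_eq_zero]
      exact mul_ne_zero Real.pi_ne_zero hs
    rw [add_comm, Complex.Gamma_add_one _ hsI, mul_assoc (s * I : ℂ),
      Complex.Gamma_mul_Gamma_one_sub, mul_assoc, div_mul_cancel₀ _ hsin]
  have hconj : ‖Complex.Gamma (1 - s * I)‖ = ‖Complex.Gamma (1 + s * I)‖ := by
    rw [← Complex.norm_conj (Complex.Gamma (1 + s * I)), ← Complex.Gamma_conj]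
    congr 2
    simp [sub_eq_add_neg]
  have h2 := congrArg norm h1
  rw [norm_mul, norm_mul, hconj, ← mul_assoc (π : ℂ), ← ofReal_mul, Complex.sin_mul_I,
    ← ofReal_sinh, norm_mul, norm_mul, norm_mul, norm_I, norm_real, norm_real, norm_real,
    Real.norm_of_nonneg Real.pi_pos.le, Real.norm_eq_abs, Real.norm_eq_abs, Real.abs_sinh, abs_mul,
    abs_of_pos Real.pi_pos, mul_one, mul_one] at h2
  have h3 := Real.sinh_le_mul_exp (u := π * |s|)
  have hs' : 0 < |s| := abs_pos.2 hs
  set G := ‖Complex.Gamma (1 + s * I)‖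
  have hG : 0 ≤ G := norm_nonneg _
  have h4 : 1 ≤ G * G * rexp (π * |s|) := by
    have : |s| * π * 1 ≤ |s| * π * (G * G * rexp (π * |s|)) := by
      calc |s| * π * 1 = G * G * Real.sinh (π * |s|) := by rw [mul_one, h2]
        _ ≤ G * G * (π * |s| * rexp (π * |s|)) := by gcongr
        _ = _ := by ring
    exact le_of_mul_le_mul_left this (by positivity)
  have h5 : 1 ≤ rexp (π * |s|) := Real.one_le_exp (by positivity)
  by_contra! h
  nlinarith [mul_nonneg hG hG, mul_nonneg hG (Real.exp_pos (π * |s|)).le]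

/-- Stein's interpolation: three lines theorem for exponential families admitting exponential growth
on the right boundary line. -/
theorem norm_integral_mul_cexp_interpolate {α : Type*} [MeasurableSpace α] {μ : Measure α}
    {Φ : α → ℂ} {b : α → ℝ} (hΦ : Integrable Φ μ) (hb : Measurable b) {M : ℝ}
    (hM : ∀ q, |b q| ≤ M) {A₀ A₁ a : ℝ}
    (h0 : ∀ y : ℝ, ‖∫ q, Φ q * cexp ((y * I) * b q) ∂μ‖ ≤ A₀)
    (h1 : ∀ y : ℝ, ‖∫ q, Φ q * cexp ((1 + y * I) * b q) ∂μ‖ ≤ A₁ * rexp (a * |y|))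
    {θ : ℝ} (hθ0 : 0 ≤ θ) (hθ1 : θ ≤ 1) :
    ‖∫ q, Φ q * cexp (θ * b q) ∂μ‖ ≤ A₀ ^ (1 - θ) * (A₁ * rexp (1 + a ^ 2 / 4)) ^ θ := by
  have hA₁ : 0 ≤ A₁ := by
    have := (norm_nonneg _).trans (h1 0)
    simpa using this
  let F : ℂ → ℂ := fun z => ∫ q, Φ q * cexp (z * b q) ∂μ
  let G : ℂ → ℂ := fun z => cexp (z ^ 2) * F z
  have hbm : AEStronglyMeasurable (fun q => (b q : ℂ)) μ :=
    (measurable_ofReal.comp hb).aestronglyMeasurable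
  have hdF : Differentiable ℂ F := fun z =>
    (hasDerivAt_integral_mul_cexp hΦ hbm (M := M) (fun q => by simpa using hM q) z).differentiableAt
  have hdG : Differentiable ℂ G := by
    intro z
    exact (by fun_prop : Differentiable ℂ fun z : ℂ => cexp (z ^ 2)) z |>.mul (hdF z)
  have hFb : ∀ z : ℂ, |z.re| ≤ 1 → ‖F z‖ ≤ rexp M * ∫ q, ‖Φ q‖ ∂μ := by
    intro z hz
    rw [← integral_const_mul]
    refine norm_integral_le_of_norm_le (hΦ.norm.const_mul _)
      (Filter.Eventually.of_forall fun q => ?_)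
    rw [norm_mul, mul_comm, Complex.norm_exp]
    gcongr
    rw [re_mul_ofReal]
    calc z.re * b q ≤ |z.re * b q| := le_abs_self _
      _ = |z.re| * |b q| := abs_mul _ _
      _ ≤ 1 * M := mul_le_mul hz (hM q) (abs_nonneg _) zero_le_one
      _ = M := one_mul _
  have hexp : ∀ z : ℂ, ‖cexp (z ^ 2)‖ = rexp (z.re ^ 2 - z.im ^ 2) := by
    intro z
    rw [Complex.norm_exp]; congr 1
    rw [sq, mul_re]; ring
  have hres := Complex.HadamardThreeLines.norm_le_interp_of_mem_verticalClosedStrip₀₁' (f := G)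
    (z := (θ : ℂ)) (a := A₀) (b := A₁ * rexp (1 + a ^ 2 / 4)) (by
      simp [Complex.HadamardThreeLines.verticalClosedStrip, hθ0, hθ1])
    hdG.diffContOnCl ?_ ?_ ?_
  · rw [ofReal_re] at hres
    refine le_trans ?_ hres
    rw [norm_mul, hexp]
    have : 1 ≤ rexp ((θ : ℂ).re ^ 2 - (θ : ℂ).im ^ 2) := by
      apply Real.one_le_exp; simp; positivity
    exact le_mul_of_one_le_left (norm_nonneg _) this
  · refine ⟨rexp 1 * (rexp M * ∫ q, ‖Φ q‖ ∂μ), ?_⟩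
    rintro _ ⟨z, hz, rfl⟩
    have hz' : 0 ≤ z.re ∧ z.re ≤ 1 := by
      simpa [Complex.HadamardThreeLines.verticalClosedStrip] using hz
    have habs : |z.re| ≤ 1 := abs_le.2 ⟨by linarith [hz'.1], hz'.2⟩
    simp only [Function.comp, G, norm_mul, hexp]
    refine mul_le_mul (Real.exp_le_exp.2 ?_) (hFb z habs) (norm_nonneg _) (Real.exp_pos _).le
    nlinarith [sq_nonneg z.im, hz'.1, hz'.2]
  · intro z hz
    have hz' : z.re = 0 := by simpa using hz
    have hzi : z = z.im * I := by apply Complex.ext <;> simp [hz']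
    have := h0 z.im
    rw [← hzi] at this
    simp only [G, norm_mul, hexp]
    calc _ ≤ 1 * A₀ := by
          refine mul_le_mul (Real.exp_le_one_iff.2 ?_) this (norm_nonneg _) zero_le_one
          rw [hz']; nlinarith [sq_nonneg z.im]
      _ = A₀ := one_mul _
  · intro z hz
    have hz' : z.re = 1 := by simpa using hz
    have hzi : z = 1 + z.im * I := by apply Complex.ext <;> simp [hz']
    have := h1 z.im
    rw [← hzi] at this
    simp only [G, norm_mul, hexp]
    calc _ ≤ rexp (z.re ^ 2 - z.im ^ 2) * (A₁ * rexp (a * |z.im|)) := by gcongr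
      _ = A₁ * rexp (z.re ^ 2 - z.im ^ 2 + a * |z.im|) := by rw [Real.exp_add]; ring
      _ ≤ _ := by
          refine mul_le_mul_of_nonneg_left (Real.exp_le_exp.2 ?_) hA₁
          rw [hz']
          nlinarith [sq_nonneg (|z.im| - a / 2), sq_abs z.im]

end ThreeLines

section FormBound

variable {E : Type*} [NormedAddCommGroup E] [InnerProductSpace ℝ E] [FiniteDimensional ℝ E]
  [MeasurableSpace E] [BorelSpace E]

theorem continuous_eulerKernel : Continuous (eulerKernel : E → ℂ) := by
  have h := continuous_parametric_integral_of_continuous (μ := (volume : Measure E).toSphere)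
    (f := fun (z : E) (ω : sphere (0 : E) 1) => (2 * (π : ℂ) * I * ((⟪z, (ω : E)⟫ : ℝ) : ℂ)) *
      cexp (2 * (π : ℂ) * I * ((⟪z, (ω : E)⟫ : ℝ) : ℂ))) (by fun_prop) isCompact_univ
  simp only [Measure.restrict_univ] at h
  exact h

theorem memLp_of_bound_of_support_closedBall {F : Type*} [NormedAddCommGroup F]
    {h : E → F} (hm : AEStronglyMeasurable h volume) {M R : ℝ} (hM : ∀ x, ‖h x‖ ≤ M)
    (hR : ∀ x, h x ≠ 0 → ‖x‖ ≤ R) (p : ℝ≥0∞) : MemLp h p := by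
  have hind : (closedBall (0 : E) R).indicator h = h := by
    refine Set.indicator_eq_self.2 fun x hx => ?_
    simpa using hR x hx
  rw [← hind, memLp_indicator_iff_restrict measurableSet_closedBall]
  have : IsFiniteMeasure ((volume : Measure E).restrict (closedBall (0 : E) R)) :=
    ⟨by simpa using measure_closedBall_lt_top⟩
  exact MemLp.of_bound hm.restrict M (Filter.Eventually.of_forall hM)

/-- Measurable functions of bounded support which are bounded above and below on their support. -/
structure IsTame (f : E → ℂ) (N : ℝ) : Prop where
  measurable : Measurable f
  norm_le : ∀ x, f x ≠ 0 → ‖x‖ ≤ N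
  abs_log_le : ∀ x, f x ≠ 0 → |Real.log ‖f x‖| ≤ N

/-- The function with the same phase as `f` and modulus `‖f‖ ^ (1 + Re c)`. -/
def powTwist (f : E → ℂ) (c : ℂ) (x : E) : ℂ := f x * cexp (c * (Real.log ‖f x‖ : ℝ))

theorem norm_powTwist (f : E → ℂ) {c : ℂ} {s : ℝ} (hs : 0 < s) (hc : 1 + c.re = s) (x : E) :
    ‖powTwist f c x‖ = ‖f x‖ ^ s := by
  rcases eq_or_ne (f x) 0 with h | h
  · simp [powTwist, h, Real.zero_rpow hs.ne']
  · have h' : 0 < ‖f x‖ := norm_pos_iff.2 h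
    rw [powTwist, norm_mul, Complex.norm_exp, re_mul_ofReal, ← hc, Real.rpow_add h', Real.rpow_one,
      Real.rpow_def_of_pos h', mul_comm c.re]

namespace IsTame

variable {f : E → ℂ} {N : ℝ}

theorem memLp_powTwist (hf : IsTame f N) (c : ℂ) (p : ℝ≥0∞) : MemLp (powTwist f c) p := by
  have hm : Measurable (powTwist f c) := by
    have := hf.measurable
    unfold powTwist
    fun_prop
  refine memLp_of_bound_of_support_closedBall hm.aestronglyMeasurable
    (M := rexp (|1 + c.re| * N)) (R := N) (fun x => ?_) (fun x hx => ?_) p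
  · rcases eq_or_ne (f x) 0 with h | h
    · simp only [powTwist, h, zero_mul, norm_zero]; positivity
    · have h' : 0 < ‖f x‖ := norm_pos_iff.2 h
      rw [powTwist, norm_mul, Complex.norm_exp, re_mul_ofReal]
      nth_rewrite 1 [← Real.exp_log h']
      rw [← Real.exp_add]
      refine Real.exp_le_exp.2 ?_
      calc Real.log ‖f x‖ + c.re * Real.log ‖f x‖ = (1 + c.re) * Real.log ‖f x‖ := by ring
        _ ≤ |(1 + c.re) * Real.log ‖f x‖| := le_abs_self _
        _ = |1 + c.re| * |Real.log ‖f x‖| := abs_mul _ _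
        _ ≤ _ := by gcongr; exact hf.abs_log_le x h
  · refine hf.norm_le x fun h => hx ?_
    simp [powTwist, h]

theorem integrable_norm_rpow (hf : IsTame f N) {p : ℝ} (hp : 0 < p) :
    Integrable fun x => ‖f x‖ ^ p := by
  have h := (memLp_one_iff_integrable.1 (hf.memLp_powTwist ((p - 1 : ℝ) : ℂ) 1)).norm
  refine h.congr (Filter.Eventually.of_forall fun x => ?_)
  exact norm_powTwist f hp (by simp) x

theorem eLpNorm_powTwist (hf : IsTame f N) {p : ℝ} (hp : 0 < p) {c : ℂ} (hc : 1 + c.re = p / 2) :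
    (eLpNorm (powTwist f c) 2 volume).toReal = (∫ x, ‖f x‖ ^ p) ^ (1 / 2 : ℝ) := by
  rw [(hf.memLp_powTwist c 2).eLpNorm_eq_integral_rpow_norm (by norm_num) (by norm_num),
    ENNReal.toReal_ofReal (by positivity)]
  simp only [norm_powTwist f (half_pos hp) hc, ENNReal.toReal_ofNat,
    ← Real.rpow_mul (norm_nonneg _)]
  rw [one_div]
  norm_num

end IsTame

theorem cexp_log_mul_neg {r : ℝ} (hr : 0 < r) (w : ℂ) :
    cexp (-w * (Real.log r : ℝ)) = (r : ℂ) ^ (-w) := by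
  rw [cpow_def_of_ne_zero (by exact_mod_cast hr.ne'), ← ofReal_log hr.le, mul_comm]

set_option maxHeartbeats 1000000 in
/-- The restricted bilinear estimate for the kernel `x · ∇K`. -/
theorem exists_eulerKernel_form_le (hn : 3 ≤ Module.finrank ℝ E) :
    ∃ C : ℝ, 0 < C ∧ ∀ (f g : E → ℂ) (N : ℝ), IsTame f N → IsTame g N →
      ‖∫ q : E × E, eulerKernel (q.1 - q.2) * (f q.2 * g q.1)‖ ≤ C *
        ((∫ x, ‖f x‖ ^ ((2 * (Module.finrank ℝ E : ℝ) + 2) / (Module.finrank ℝ E + 5))) *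
          ∫ x, ‖g x‖ ^ ((2 * (Module.finrank ℝ E : ℝ) + 2) / (Module.finrank ℝ E + 5))) ^
          (((Module.finrank ℝ E : ℝ) + 5) / (2 * Module.finrank ℝ E + 2)) := by
  obtain ⟨C₀, hC₀, hdecay⟩ := exists_eulerKernel_decay (E := E) hn
  obtain ⟨B, hB, hmult⟩ := exists_bounded_multiplier (E := E) hn
  have hd3 : (3 : ℝ) ≤ Module.finrank ℝ E := by exact_mod_cast hn
  set d : ℝ := (Module.finrank ℝ E : ℝ) with hd
  set p : ℝ := (2 * d + 2) / (d + 5) with hp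
  set κ : ℝ := (d - 3) / 4 with hκ
  set θ : ℝ := (d - 3) / (d + 1) with hθ
  have hκ0 : 0 ≤ κ := by rw [hκ]; linarith
  have hp0 : 0 < p := by positivity
  have hθ0 : 0 ≤ θ := div_nonneg (by linarith) (by linarith)
  have hθ1 : θ ≤ 1 := (div_le_one (by linarith)).2 (by linarith)
  have hκθ : κ - θ * (κ + 1) = 0 := by
    have : d + 1 ≠ 0 := by linarith
    rw [hκ, hθ]; field_simp; ring
  have hpθ : p - 1 - θ * (p / 2) = 0 := by
    have : d + 1 ≠ 0 := by linarith
    have : d + 5 ≠ 0 := by linarith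
    rw [hp, hθ]; field_simp; ring
  have hinv : (d + 5) / (2 * d + 2) = (1 - θ) + 1 / 2 * θ := by
    have : d + 1 ≠ 0 := by linarith
    rw [hθ]; field_simp; ring
  rw [hinv]
  set D : ℝ := rexp (1 + (π * (κ + 1)) ^ 2 / 4) with hD
  refine ⟨C₀ ^ (1 - θ) * (B * D) ^ θ + 1, by positivity, fun f g N hf hg => ?_⟩
  set X := ∫ x, ‖f x‖ ^ p
  set Y := ∫ x, ‖g x‖ ^ p
  have hX : 0 ≤ X := integral_nonneg fun x => by positivity
  have hY : 0 ≤ Y := integral_nonneg fun x => by positivity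
  let L : E × E → ℝ := fun q => Real.log (1 + ‖q.1 - q.2‖ ^ 2)
  let ℓ : E × E → ℝ := fun q => Real.log ‖f q.2‖ + Real.log ‖g q.1‖
  let Φ : E × E → ℂ := fun q => eulerKernel (q.1 - q.2) * (f q.2 * g q.1) *
    (rexp (κ * L q + (p - 1) * ℓ q) : ℂ)
  let S : Set (E × E) := {q | f q.2 * g q.1 ≠ 0}
  let b : E × E → ℝ := S.indicator fun q => -((κ + 1) * L q + p / 2 * ℓ q)
  have hfm := hf.measurable
  have hgm := hg.measurable
  have hKm : Measurable (eulerKernel : E → ℂ) := continuous_eulerKernel.measurable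
  have hLm : Measurable L := by fun_prop
  have hℓm : Measurable ℓ := by fun_prop
  have hS : MeasurableSet S := by
    have : Measurable fun q : E × E => f q.2 * g q.1 := by fun_prop
    exact (this (measurableSet_singleton (0 : ℂ))).compl
  have hbm : Measurable b := Measurable.indicator (by fun_prop) hS
  have hΦm : Measurable Φ := by fun_prop
  have hform : ∀ (z : ℂ) q, Φ q * cexp (z * b q) = eulerKernel (q.1 - q.2) * (f q.2 * g q.1) *
      cexp ((κ - z * (κ + 1)) * L q + (p - 1 - z * (p / 2)) * ℓ q) := by
    intro z q
    by_cases hq : q ∈ S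
    · simp only [Φ, b, Set.indicator_of_mem hq]
      rw [mul_assoc, ofReal_exp, ← Complex.exp_add]
      congr 2
      push_cast; ring
    · have : f q.2 * g q.1 = 0 := not_not.1 hq
      simp [Φ, this]
  have hnorm : ∀ (z : ℂ) q, z.re = 0 →
      ‖Φ q * cexp (z * b q)‖ ≤ C₀ * (‖g q.1‖ ^ p * ‖f q.2‖ ^ p) := by
    intro z q hz
    have hr : (0 : ℝ) < 1 + ‖q.1 - q.2‖ ^ 2 := by positivity
    rw [norm_mul, Complex.norm_exp, re_mul_ofReal, hz, zero_mul, Real.exp_zero, mul_one]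
    have hsplit : Φ q = (eulerKernel (q.1 - q.2) * (((1 + ‖q.1 - q.2‖ ^ 2) ^ κ : ℝ) : ℂ)) *
        (powTwist g ((p - 1 : ℝ) : ℂ) q.1 * powTwist f ((p - 1 : ℝ) : ℂ) q.2) := by
      simp only [Φ, powTwist, L, ℓ]
      rw [Real.rpow_def_of_pos hr, mul_add, Real.exp_add, Real.exp_add]
      push_cast
      rw [mul_comm (κ : ℂ)]
      ring
    rw [hsplit, norm_mul, norm_mul, norm_mul, norm_powTwist f hp0 (by simp),
      norm_powTwist g hp0 (by simp), norm_real, Real.norm_of_nonneg (by positivity)]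
    gcongr
    exact hdecay _
  have hfp := hf.integrable_norm_rpow hp0
  have hgp := hg.integrable_norm_rpow hp0
  have hdom : Integrable fun q : E × E => C₀ * (‖g q.1‖ ^ p * ‖f q.2‖ ^ p) :=
    (hgp.mul_prod hfp).const_mul C₀
  have hΦ : Integrable Φ := by
    refine hdom.mono' hΦm.aestronglyMeasurable (Filter.Eventually.of_forall fun q => ?_)
    simpa using hnorm 0 q rfl
  have hbM : ∀ q, |b q| ≤ (κ + 1) * Real.log (1 + (N + N) ^ 2) + p / 2 * |N + N| := by
    intro q
    by_cases hq : q ∈ S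
    · have hq' : f q.2 ≠ 0 ∧ g q.1 ≠ 0 := by simpa [S] using hq
      have hL0 : 0 ≤ L q := Real.log_nonneg (by linarith [sq_nonneg ‖q.1 - q.2‖])
      have hL : L q ≤ Real.log (1 + (N + N) ^ 2) := by
        refine Real.log_le_log (by positivity) ?_
        gcongr
        exact (norm_sub_le _ _).trans (add_le_add (hg.norm_le _ hq'.2) (hf.norm_le _ hq'.1))
      have hℓ : |ℓ q| ≤ |N + N| := ((abs_add_le _ _).trans
        (add_le_add (hf.abs_log_le _ hq'.1) (hg.abs_log_le _ hq'.2))).trans (le_abs_self _)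
      simp only [b, Set.indicator_of_mem hq, abs_neg]
      refine (abs_add_le _ _).trans ?_
      rw [abs_mul, abs_mul, abs_of_nonneg hL0, abs_of_pos (by positivity : 0 < κ + 1),
        abs_of_pos (by positivity : 0 < p / 2)]
      gcongr
    · simp only [b, Set.indicator_of_notMem hq, abs_zero]
      have : 0 ≤ Real.log (1 + (N + N) ^ 2) := Real.log_nonneg (by linarith [sq_nonneg (N + N)])
      positivity
  have hbound := norm_integral_mul_cexp_interpolate hΦ hbm hbM
    (A₀ := C₀ * (Y * X)) (A₁ := B * (X ^ (1 / 2 : ℝ) * Y ^ (1 / 2 : ℝ))) (a := π * (κ + 1))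
    (fun y => ?_) (fun y => ?_) hθ0 hθ1
  · have hval : ∫ q : E × E, Φ q * cexp (θ * b q) =
        ∫ q : E × E, eulerKernel (q.1 - q.2) * (f q.2 * g q.1) := by
      congr 1; ext q
      have e1 : (κ : ℂ) - θ * (κ + 1) = 0 := by exact_mod_cast hκθ
      have e2 : (p : ℂ) - 1 - θ * (p / 2) = 0 := by exact_mod_cast hpθ
      rw [hform, e1, e2]; simp
    rw [hval] at hbound
    refine hbound.trans ?_
    have hXY : 0 ≤ X * Y := mul_nonneg hX hY
    have hBD : 0 ≤ B * D := by positivity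
    calc (C₀ * (Y * X)) ^ (1 - θ) * (B * (X ^ (1 / 2 : ℝ) * Y ^ (1 / 2 : ℝ)) * D) ^ θ
        = (C₀ ^ (1 - θ) * (B * D) ^ θ) * ((X * Y) ^ (1 - θ) * ((X * Y) ^ (1 / 2 : ℝ)) ^ θ) := by
          rw [← Real.mul_rpow hX hY, mul_comm Y X, mul_right_comm B,
            Real.mul_rpow hC₀.le hXY, Real.mul_rpow hBD (by positivity)]
          ring
      _ = (C₀ ^ (1 - θ) * (B * D) ^ θ) * (X * Y) ^ (1 - θ + 1 / 2 * θ) := by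
          rw [← Real.rpow_mul hXY, ← Real.rpow_add_of_nonneg hXY (by linarith) (by positivity)]
      _ ≤ _ := by
          refine mul_le_mul_of_nonneg_right (by linarith) (Real.rpow_nonneg hXY _)
  · refine (norm_integral_le_of_norm_le hdom (Filter.Eventually.of_forall fun q =>
      hnorm _ q (by simp))).trans (le_of_eq ?_)
    rw [integral_const_mul]
    congr 1
    exact integral_prod_mul (fun x => ‖g x‖ ^ p) fun x => ‖f x‖ ^ p
  · set s : ℝ := (κ + 1) * y with hs
    set w : ℂ := 1 + s * I with hw
    set c : ℂ := p - 1 - (1 + y * I) * (p / 2) with hc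
    have hwre : w.re = 1 := by simp [hw]
    have hcre : 1 + c.re = p / 2 := by
      simp [hc, sub_re, mul_re]; ring
    obtain ⟨m, hm, hmB, hmk⟩ := hmult w hwre
    have hI := norm_multiplier_form_le hm hmB hmk
      (memLp_one_iff_integrable.1 (hf.memLp_powTwist c 1)) (hf.memLp_powTwist c 2)
      (memLp_one_iff_integrable.1 (hg.memLp_powTwist c 1)) (hg.memLp_powTwist c 2)
    rw [hf.eLpNorm_powTwist hp0 hcre, hg.eLpNorm_powTwist hp0 hcre] at hI
    have hJ : ∫ q : E × E, (Complex.Gamma w * (eulerKernel (q.1 - q.2) *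
          ((1 + ‖q.1 - q.2‖ ^ 2 : ℝ) : ℂ) ^ (-w))) * (powTwist f c q.2 * powTwist g c q.1) =
        Complex.Gamma w * ∫ q : E × E, Φ q * cexp ((1 + y * I) * b q) := by
      rw [← integral_const_mul]
      congr 1; ext q
      have hr : (0 : ℝ) < 1 + ‖q.1 - q.2‖ ^ 2 := by positivity
      have e1 : (κ : ℂ) - (1 + y * I) * (κ + 1) = -w := by
        rw [hw, hs]; push_cast; ring
      rw [hform, e1, ← hc, ← cexp_log_mul_neg hr, Complex.exp_add]
      simp only [powTwist, ℓ, L]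
      push_cast
      rw [mul_add, Complex.exp_add]
      ring
    rw [hJ, norm_mul] at hI
    have hG := one_le_norm_Gamma_one_add_mul_I s
    set T := ‖∫ q : E × E, Φ q * cexp ((1 + y * I) * b q)‖
    have hT : 0 ≤ T := norm_nonneg _
    calc T = 1 * T := (one_mul _).symm
      _ ≤ (‖Complex.Gamma w‖ * rexp (π * |s|)) * T := mul_le_mul_of_nonneg_right hG hT
      _ = (‖Complex.Gamma w‖ * T) * rexp (π * |s|) := by ring
      _ ≤ (B * (X ^ (1 / 2 : ℝ) * Y ^ (1 / 2 : ℝ))) * rexp (π * |s|) := by gcongr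
      _ = _ := by
          rw [hs, abs_mul, abs_of_pos (by positivity : 0 < κ + 1), ← mul_assoc π]

end FormBound

section Convolution

variable {E : Type*} [NormedAddCommGroup E] [InnerProductSpace ℝ E] [FiniteDimensional ℝ E]
  [MeasurableSpace E] [BorelSpace E]

theorem exists_norm_eulerKernel_le (hn : 3 ≤ Module.finrank ℝ E) :
    ∃ C : ℝ, 0 < C ∧ ∀ x : E, ‖eulerKernel x‖ ≤ C := by
  obtain ⟨C, hC, h⟩ := exists_eulerKernel_decay (E := E) hn
  have hd3 : (3 : ℝ) ≤ Module.finrank ℝ E := by exact_mod_cast hn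
  refine ⟨C, hC, fun x => le_trans ?_ (h x)⟩
  refine le_mul_of_one_le_right (norm_nonneg _) (Real.one_le_rpow ?_ (by linarith))
  linarith [sq_nonneg ‖x‖]

/-- The set on which truncating `f` at level `N` changes nothing. -/
def tameSet (f : E → ℂ) (N : ℝ) : Set E := {x | ‖x‖ ≤ N ∧ |Real.log ‖f x‖| ≤ N}

theorem measurableSet_tameSet {f : E → ℂ} (hf : Measurable f) (N : ℝ) :
    MeasurableSet (tameSet f N) := by
  have h : Measurable fun x => |Real.log ‖f x‖| := by fun_prop
  exact (measurableSet_le measurable_norm measurable_const).inter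
    (measurableSet_le h measurable_const)

theorem isTame_indicator_tameSet {f : E → ℂ} (hf : Measurable f) (N : ℝ) :
    IsTame ((tameSet f N).indicator f) N where
  measurable := hf.indicator (measurableSet_tameSet hf N)
  norm_le x hx := (Set.mem_of_indicator_ne_zero hx).1
  abs_log_le x hx := by
    have h := Set.mem_of_indicator_ne_zero hx
    rw [Set.indicator_of_mem h]
    exact h.2

theorem IsTame.mono {f : E → ℂ} {N N' : ℝ} (hf : IsTame f N) (h : N ≤ N') : IsTame f N' :=
  ⟨hf.measurable, fun x hx => (hf.norm_le x hx).trans h, fun x hx => (hf.abs_log_le x hx).trans h⟩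

theorem IsTame.integrable {f : E → ℂ} {N : ℝ} (hf : IsTame f N) : Integrable f := by
  have h := hf.integrable_norm_rpow one_pos
  simp only [Real.rpow_one] at h
  exact (integrable_norm_iff hf.measurable.aestronglyMeasurable).1 h

theorem tendsto_indicator_tameSet {F : Type*} [TopologicalSpace F] [Zero F] (f : E → ℂ)
    (u : E → F) (x : E) :
    Filter.Tendsto (fun N : ℕ => (tameSet f N).indicator u x) Filter.atTop (nhds (u x)) := by
  refine tendsto_const_nhds.congr' ?_
  filter_upwards [Filter.eventually_ge_atTop ⌈max ‖x‖ |Real.log ‖f x‖|⌉₊] with N hN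
  have h := Nat.ceil_le.1 hN
  rw [Set.indicator_of_mem (show x ∈ tameSet f N from
    ⟨(le_max_left _ _).trans h, (le_max_right _ _).trans h⟩)]

theorem integrable_eulerKernel_form (hn : 3 ≤ Module.finrank ℝ E) {f g : E → ℂ}
    (hf : Integrable f) (hg : Integrable g) :
    Integrable fun q : E × E => eulerKernel (q.1 - q.2) * (f q.2 * g q.1) := by
  obtain ⟨C, -, hC⟩ := exists_norm_eulerKernel_le (E := E) hn
  have h : Integrable fun q : E × E => f q.2 * g q.1 := by
    rw [Measure.volume_eq_prod]
    simpa only [mul_comm] using hg.mul_prod hf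
  exact h.bdd_mul (c := C)
    (continuous_eulerKernel.comp (continuous_fst.sub continuous_snd)).aestronglyMeasurable
    (Filter.Eventually.of_forall fun q => hC _)

/-- The restricted weak form of the convolution estimate, for one tame argument. -/
theorem exists_eulerKernel_form_le_of_integrable (hn : 3 ≤ Module.finrank ℝ E) :
    ∃ C : ℝ, 0 < C ∧ ∀ (f g : E → ℂ) (N : ℝ), Measurable f → Integrable f →
      Integrable (fun x => ‖f x‖ ^ ((2 * (Module.finrank ℝ E : ℝ) + 2) /
        ((Module.finrank ℝ E : ℝ) + 5))) → IsTame g N →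
      ‖∫ q : E × E, eulerKernel (q.1 - q.2) * (f q.2 * g q.1)‖ ≤
        C * ((∫ x, ‖f x‖ ^ ((2 * (Module.finrank ℝ E : ℝ) + 2) /
            ((Module.finrank ℝ E : ℝ) + 5))) *
          ∫ x, ‖g x‖ ^ ((2 * (Module.finrank ℝ E : ℝ) + 2) /
            ((Module.finrank ℝ E : ℝ) + 5))) ^
          (((Module.finrank ℝ E : ℝ) + 5) / (2 * (Module.finrank ℝ E : ℝ) + 2)) := by
  obtain ⟨C, hC, h⟩ := exists_eulerKernel_form_le (E := E) hn
  refine ⟨C, hC, fun f g N hfm hf hfp hg => ?_⟩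
  set p : ℝ := (2 * (Module.finrank ℝ E : ℝ) + 2) / ((Module.finrank ℝ E : ℝ) + 5) with hp
  have hp0 : 0 < p := by positivity
  have hgi := hg.integrable
  have hlim : Filter.Tendsto (fun k : ℕ => ∫ q : E × E, eulerKernel (q.1 - q.2) *
      ((tameSet f k).indicator f q.2 * g q.1)) Filter.atTop
      (nhds (∫ q : E × E, eulerKernel (q.1 - q.2) * (f q.2 * g q.1))) := by
    refine tendsto_integral_of_dominated_convergence _ (fun k => ?_)
      (integrable_eulerKernel_form hn hf hgi).norm (fun k => ?_) ?_
    · exact (integrable_eulerKernel_form hn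
        (hf.indicator (measurableSet_tameSet hfm k)) hgi).aestronglyMeasurable
    · refine Filter.Eventually.of_forall fun q => ?_
      simp only [norm_mul]
      gcongr
      exact norm_indicator_le_norm_self _ _
    · exact Filter.Eventually.of_forall fun q =>
        ((tendsto_indicator_tameSet f f q.2).mul_const _).const_mul _
  refine le_of_tendsto hlim.norm ?_
  filter_upwards [Filter.eventually_ge_atTop ⌈N⌉₊] with k hk
  refine (h _ g k (isTame_indicator_tameSet hfm k) (hg.mono (Nat.ceil_le.1 hk))).trans ?_
  have hnn : ∀ u : E → ℂ, 0 ≤ ∫ x, ‖u x‖ ^ p := fun u => integral_nonneg fun x => by positivity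
  have hmono : ∫ x, ‖(tameSet f k).indicator f x‖ ^ p ≤ ∫ x, ‖f x‖ ^ p := by
    refine integral_mono_of_nonneg (Filter.Eventually.of_forall fun x => by positivity) hfp
      (Filter.Eventually.of_forall fun x => ?_)
    exact Real.rpow_le_rpow (norm_nonneg _) (norm_indicator_le_norm_self _ _) hp0.le
  have := hnn f
  have := hnn g
  have := hnn ((tameSet f k).indicator f)
  gcongr

theorem continuous_convolution_eulerKernel (hn : 3 ≤ Module.finrank ℝ E) {f : E → ℂ}
    (hf : Integrable f) : Continuous fun x => ∫ y, f y * eulerKernel (x - y) := by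
  obtain ⟨C, -, hC⟩ := exists_norm_eulerKernel_le (E := E) hn
  refine continuous_of_dominated (bound := fun y => ‖f y‖ * C) (fun x => ?_) (fun x => ?_)
    (hf.norm.mul_const C) ?_
  · exact hf.aestronglyMeasurable.mul
      (continuous_eulerKernel.comp (continuous_const.sub continuous_id)).aestronglyMeasurable
  · refine Filter.Eventually.of_forall fun y => ?_
    rw [norm_mul]
    gcongr
    exact hC _
  · exact Filter.Eventually.of_forall fun y => continuous_const.mul
      (continuous_eulerKernel.comp (continuous_id.sub continuous_const))

theorem norm_convolution_eulerKernel_le {C : ℝ} (hC : ∀ x : E, ‖eulerKernel x‖ ≤ C)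
    {f : E → ℂ} (hf : Integrable f) (x : E) :
    ‖∫ y, f y * eulerKernel (x - y)‖ ≤ C * ∫ y, ‖f y‖ := by
  rw [mul_comm, ← integral_mul_const]
  refine norm_integral_le_of_norm_le (hf.norm.mul_const C) (Filter.Eventually.of_forall fun y => ?_)
  rw [norm_mul]
  gcongr
  exact hC _

theorem exists_eLpNorm_convolution_eulerKernel_le (hn : 3 < Module.finrank ℝ E) :
    ∃ C : ℝ, 0 < C ∧ ∀ f : E → ℂ, Measurable f → Integrable f →
      Integrable (fun x => ‖f x‖ ^ ((2 * (Module.finrank ℝ E : ℝ) + 2) /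
        ((Module.finrank ℝ E : ℝ) + 5))) →
      eLpNorm (fun x => ∫ y, f y * eulerKernel (x - y))
        (ENNReal.ofReal ((2 * (Module.finrank ℝ E : ℝ) + 2) / ((Module.finrank ℝ E : ℝ) - 3)))
        volume ≤
      ENNReal.ofReal (C * (∫ x, ‖f x‖ ^ ((2 * (Module.finrank ℝ E : ℝ) + 2) /
          ((Module.finrank ℝ E : ℝ) + 5))) ^
        (((Module.finrank ℝ E : ℝ) + 5) / (2 * (Module.finrank ℝ E : ℝ) + 2))) := by
  obtain ⟨C, hC, hform⟩ := exists_eulerKernel_form_le_of_integrable (E := E) hn.le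
  obtain ⟨C₀, -, hC₀⟩ := exists_norm_eulerKernel_le (E := E) hn.le
  refine ⟨C, hC, fun f hfm hf hfp => ?_⟩
  have hd3 : (3 : ℝ) < Module.finrank ℝ E := by exact_mod_cast hn
  replace hform := fun g N hg => hform f g N hfm hf hfp hg
  set d : ℝ := (Module.finrank ℝ E : ℝ) with hd
  set p : ℝ := (2 * d + 2) / (d + 5) with hp
  set α : ℝ := (d + 5) / (2 * d + 2) with hα
  set r : ℝ := (2 * d + 2) / (d - 3) with hr
  have hd3' : 0 < d - 3 := by linarith
  have hr0 : 0 < r := by positivity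
  have hrp : (r - 1) * p = r := by rw [hr, hp]; field_simp; ring
  have hαr : 1 - α = r⁻¹ := by rw [hr, hα]; field_simp; ring
  have hα0 : 0 < α := by positivity
  have hp0 : 0 < p := by positivity
  set X := ∫ x, ‖f x‖ ^ p
  have hX : 0 ≤ X := integral_nonneg fun x => by positivity
  set h : E → ℂ := fun x => ∫ y, f y * eulerKernel (x - y)
  have hhc : Continuous h := continuous_convolution_eulerKernel hn.le hf
  have hhm : Measurable h := hhc.measurable
  let g : E → ℂ := fun x => (starRingEnd ℂ) (h x) * ((‖h x‖ ^ (r - 2) : ℝ) : ℂ)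
  have hgm : Measurable g := by
    have : Measurable fun x => (starRingEnd ℂ) (h x) := continuous_conj.measurable.comp hhm
    fun_prop
  have hgh : ∀ x, g x * h x = ((‖h x‖ ^ r : ℝ) : ℂ) := by
    intro x
    by_cases hx : h x = 0
    · simp [g, hx, Real.zero_rpow hr0.ne']
    · have hx' : 0 < ‖h x‖ := norm_pos_iff.2 hx
      simp only [g]
      rw [mul_right_comm, mul_comm ((starRingEnd ℂ) _), mul_conj, normSq_eq_norm_sq, ← ofReal_mul,
        ← Real.rpow_natCast, ← Real.rpow_add hx']
      norm_num
  have hgn : ∀ x, ‖g x‖ ^ p = ‖h x‖ ^ r := by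
    intro x
    by_cases hx : h x = 0
    · simp [g, hx, Real.zero_rpow hr0.ne', Real.zero_rpow hp0.ne']
    · have hx' : 0 < ‖h x‖ := norm_pos_iff.2 hx
      have : ‖g x‖ = ‖h x‖ ^ (r - 1) := by
        simp only [g]
        rw [norm_mul, RCLike.norm_conj, norm_real, Real.norm_of_nonneg (by positivity)]
        nth_rewrite 1 [← Real.rpow_one ‖h x‖]
        rw [← Real.rpow_add hx']
        ring_nf
      rw [this, ← Real.rpow_mul hx'.le, hrp]
  have hle := Lp.eLpNorm_lim_le_liminf_eLpNorm (p := ENNReal.ofReal r) (μ := volume)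
    (f := fun (k : ℕ) => (tameSet g k).indicator h)
    (fun k => (hhm.indicator (measurableSet_tameSet hgm k)).aestronglyMeasurable) h
    (Filter.Eventually.of_forall (tendsto_indicator_tameSet g h))
  refine hle.trans (Filter.liminf_le_of_frequently_le' (Filter.Frequently.of_forall fun k => ?_))
  have hS := measurableSet_tameSet hgm k
  have htame := isTame_indicator_tameSet hgm k
  have hmem : MemLp ((tameSet g k).indicator h) (ENNReal.ofReal r) volume :=
    memLp_of_bound_of_support_closedBall (hhm.indicator hS).aestronglyMeasurable
      (fun x => (norm_indicator_le_norm_self _ _).trans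
        (norm_convolution_eulerKernel_le hC₀ hf x))
      (fun x hx => (Set.mem_of_indicator_ne_zero hx).1) _
  rw [hmem.eLpNorm_eq_integral_rpow_norm (by simpa using hr0) ENNReal.ofReal_ne_top,
    ENNReal.toReal_ofReal hr0.le]
  refine ENNReal.ofReal_le_ofReal ?_
  have hind : ∀ x, ‖(tameSet g k).indicator h x‖ ^ r =
      (tameSet g k).indicator (fun x => ‖h x‖ ^ r) x := by
    intro x
    by_cases hx : x ∈ tameSet g k <;> simp [hx, Real.zero_rpow hr0.ne']
  have hind' : ∀ x, ‖(tameSet g k).indicator g x‖ ^ p =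
      (tameSet g k).indicator (fun x => ‖h x‖ ^ r) x := by
    intro x
    by_cases hx : x ∈ tameSet g k <;> simp [hx, Real.zero_rpow hp0.ne', hgn]
  simp only [hind]
  have hform' := hform _ k htame
  simp only [hind'] at hform'
  set Z := ∫ x, (tameSet g k).indicator (fun x => ‖h x‖ ^ r) x
  have hZ : 0 ≤ Z := integral_nonneg fun x => Set.indicator_nonneg (fun x _ => by positivity) x
  have hgi := htame.integrable
  have hval : ∫ q : E × E, eulerKernel (q.1 - q.2) * (f q.2 * (tameSet g k).indicator g q.1) =
      (Z : ℂ) := by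
    have hInt := integrable_eulerKernel_form hn.le hf hgi
    rw [Measure.volume_eq_prod] at hInt ⊢
    rw [integral_prod _ hInt]
    refine Eq.trans ?_ integral_ofReal
    congr 1; ext x
    have : ∀ y, eulerKernel (x - y) * (f y * (tameSet g k).indicator g x) =
        (tameSet g k).indicator g x * (f y * eulerKernel (x - y)) := fun y => by ring
    simp only [this]
    rw [integral_const_mul]
    by_cases hx : x ∈ tameSet g k
    · rw [Set.indicator_of_mem hx, Set.indicator_of_mem hx]
      exact hgh x
    · simp [hx]
  rw [hval, norm_real, Real.norm_of_nonneg hZ] at hform'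
  rcases hZ.eq_or_lt with hZ0 | hZ0
  · rw [← hZ0, Real.zero_rpow (by positivity)]
    positivity
  · rw [← hαr, Real.rpow_sub hZ0, Real.rpow_one,
      div_le_iff₀ (by positivity), mul_assoc, ← Real.mul_rpow hX hZ]
    exact hform'

end Convolution

/-- Stein–Tomas type convolution bound for the kernel
`K̃(x) = x·∇K(x)`, where `K = σ̂` is the Fourier transform of the surface measure of the
unit sphere: convolution with `K̃` maps `L^{(2n+2)/(n+5)}` to `L^{(2n+2)/(n-3)}`
(with target `L^∞` when `n = 3`). -/
theorem stein_tomas_derivative_kernel (n : ℕ) (hn : 3 ≤ n) :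
    ∃ C : ℝ, 0 < C ∧ ∀ f : SchwartzMap (EuclideanSpace ℝ (Fin n)) ℂ,
      eLpNorm (fun x : EuclideanSpace ℝ (Fin n) =>
          ∫ y : EuclideanSpace ℝ (Fin n), f y *
            (fderiv ℝ (fun z : EuclideanSpace ℝ (Fin n) =>
                ∫ ω : sphere (0 : EuclideanSpace ℝ (Fin n)) 1,
                  Complex.exp (2 * (π : ℂ) * I *
                    ((⟪z, (ω : EuclideanSpace ℝ (Fin n))⟫ : ℝ) : ℂ))
                  ∂((volume : Measure (EuclideanSpace ℝ (Fin n))).toSphere))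
              (x - y) (x - y)))
        (if n = 3 then (⊤ : ℝ≥0∞) else ENNReal.ofReal ((2 * (n : ℝ) + 2) / ((n : ℝ) - 3)))
        volume
      ≤ ENNReal.ofReal (C *
          (∫ x : EuclideanSpace ℝ (Fin n), ‖f x‖ ^ ((2 * (n : ℝ) + 2) / ((n : ℝ) + 5)))
            ^ (((n : ℝ) + 5) / (2 * (n : ℝ) + 2))) := by
  have hfin : Module.finrank ℝ (EuclideanSpace ℝ (Fin n)) = n := finrank_euclideanSpace_fin
  change ∃ C : ℝ, 0 < C ∧ ∀ f : SchwartzMap (EuclideanSpace ℝ (Fin n)) ℂ,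
      eLpNorm (fun x : EuclideanSpace ℝ (Fin n) => ∫ y : EuclideanSpace ℝ (Fin n), f y *
        (fderiv ℝ sphereWave (x - y) (x - y))) _ volume ≤ _
  simp only [fderiv_sphereWave_self]
  rcases hn.eq_or_lt with rfl | hn
  · obtain ⟨C, hC, hK⟩ := exists_norm_eulerKernel_le (E := EuclideanSpace ℝ (Fin 3)) hfin.ge
    refine ⟨C, hC, fun f => ?_⟩
    rw [if_pos rfl, show (2 * ((3 : ℕ) : ℝ) + 2) / (((3 : ℕ) : ℝ) + 5) = 1 by norm_num,
      show (((3 : ℕ) : ℝ) + 5) / (2 * ((3 : ℕ) : ℝ) + 2) = 1 by norm_num, eLpNorm_exponent_top]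
    simp only [Real.rpow_one]
    exact eLpNormEssSup_le_of_ae_bound
      (Filter.Eventually.of_forall (norm_convolution_eulerKernel_le hK f.integrable))
  · obtain ⟨C, hC, h⟩ := exists_eLpNorm_convolution_eulerKernel_le
      (E := EuclideanSpace ℝ (Fin n)) (by rwa [hfin])
    rw [hfin] at h
    refine ⟨C, hC, fun f => ?_⟩
    rw [if_neg hn.ne']
    refine h f f.continuous.measurable f.integrable ?_
    have hp : 0 < (2 * (n : ℝ) + 2) / ((n : ℝ) + 5) := by positivity
    have := (f.memLp (ENNReal.ofReal ((2 * (n : ℝ) + 2) / ((n : ℝ) + 5)))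
      volume).integrable_norm_rpow (by simpa using hp) ENNReal.ofReal_ne_top
    rwa [ENNReal.toReal_ofReal hp.le] at this
end
end

section
/- Let n ≥ 1 and let g : ℝ × ℝⁿ → ℂ be continuous with compact support. For λ ∈ [0,1] define P_λ g(t,x) = Σ_{m ∈ ℤ} e^{−2πiλm} g(t + 2πm, x) (a finite sum for each (t,x)). Then the Plancherel identity ∫_0^1 ∫_0^{2π} ∫_{ℝⁿ} |P_λ g(t,x)|² dx dt dλ = ∫_{ℝ} ∫_{ℝⁿ} |g(t,x)|² dx dt holds. -/
open MeasureTheory Complex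
open scoped Real

noncomputable section

open scoped ComplexConjugate

/-- Orthonormality on `[0, 1]` of the characters `exp (-2πi m ·)`. -/
lemma integral_exp_mul_conj_exp (m k : ℤ) :
    ∫ lam in (0:ℝ)..1, Complex.exp (-(2 * (π : ℂ) * I * (lam : ℂ) * (m : ℂ))) *
      conj (Complex.exp (-(2 * (π : ℂ) * I * (lam : ℂ) * (k : ℂ)))) =
      if m = k then 1 else 0 := by
  have key : ∀ lam : ℝ, Complex.exp (-(2 * (π : ℂ) * I * (lam : ℂ) * (m : ℂ))) *
      conj (Complex.exp (-(2 * (π : ℂ) * I * (lam : ℂ) * (k : ℂ)))) =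
      Complex.exp ((2 * (π : ℂ) * I * ((k : ℂ) - m)) * (lam : ℂ)) := by
    intro lam
    rw [← Complex.exp_conj, ← Complex.exp_add]
    congr 1
    simp only [map_neg, map_mul, map_ofNat, conj_ofReal, conj_I, map_intCast]
    ring
  simp_rw [key]
  split_ifs with h
  · simp [h]
  · have hkm : (k : ℂ) - m ≠ 0 := sub_ne_zero.mpr (by exact_mod_cast Ne.symm h)
    rw [integral_exp_mul_complex (mul_ne_zero Complex.two_pi_I_ne_zero hkm)]
    have : Complex.exp (2 * (π : ℂ) * I * ((k : ℂ) - m) * ((1 : ℝ) : ℂ)) = 1 := by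
      rw [Complex.exp_eq_one_iff]
      exact ⟨k - m, by push_cast; ring⟩
    rw [this, ofReal_zero, mul_zero, Complex.exp_zero, sub_self, zero_div]

/-- The integral of an integrable function over `ℝ` is the sum of its integrals over the
translates of `[0, T]`. -/
lemma hasSum_intervalIntegral_comp_add_mul_int {F : ℝ → ℝ} (hF : Integrable F) {T : ℝ}
    (hT : 0 < T) :
    HasSum (fun m : ℤ => ∫ t in (0:ℝ)..T, F (t + T * m)) (∫ t, F t) := by
  have h := (hF.comp_mul_left' hT.ne').hasSum_intervalIntegral_comp_add_int.mul_left T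
  rw [Measure.integral_comp_mul_left, smul_eq_mul, abs_of_pos (inv_pos.mpr hT),
    mul_inv_cancel_left₀ hT.ne'] at h
  refine (congrArg (HasSum · _) (funext fun m => ?_)).mpr h
  have := intervalIntegral.mul_integral_comp_mul_left (a := 0) (b := 1)
    (f := fun t => F (t + T * m)) T
  simp only [mul_zero, mul_one] at this
  rw [← this]
  simp only [mul_add]

section

variable {E : Type*} [NormedAddCommGroup E]

/-- Time translation preserves compactness of the support. -/
lemma HasCompactSupport.comp_time_translate {g : ℝ × E → ℂ} (hsupp : HasCompactSupport g)
    (c : ℝ) : HasCompactSupport fun p : ℝ × E => g (p.1 + c, p.2) :=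
  hsupp.comp_homeomorph ((Homeomorph.addRight c).prodCongr (Homeomorph.refl E))

/-- Time slices of a compactly supported function are compactly supported. -/
lemma HasCompactSupport.time_slice {h : ℝ × E → ℂ} (hsupp : HasCompactSupport h) (t : ℝ) :
    HasCompactSupport fun x => h (t, x) := by
  refine HasCompactSupport.intro (hsupp.isCompact.image continuous_snd) fun x hx => ?_
  by_contra hne
  exact hx ⟨(t, x), subset_tsupport h hne, rfl⟩

/-- Only finitely many translates by multiples of `T` of a compact support meet `[0, T]`. -/
lemma HasCompactSupport.exists_finset_translate_eq_zero {g : ℝ × E → ℂ}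
    (hsupp : HasCompactSupport g) {T : ℝ} (hT : 0 < T) :
    ∃ S : Finset ℤ, ∀ m ∉ S, ∀ t ∈ Set.Icc 0 T, ∀ x, g (t + T * (m : ℝ), x) = 0 := by
  obtain ⟨R, hR⟩ := (hsupp.isCompact.image continuous_fst).isBounded.subset_closedBall 0
  refine ⟨Finset.Icc ⌊-R / T - 1⌋ ⌈R / T⌉, fun m hm t ht x => ?_⟩
  by_contra hne
  have hb : |t + T * m| ≤ R := by
    simpa using hR ⟨(t + T * m, x), subset_tsupport g hne, rfl⟩
  obtain ⟨hl, hu⟩ := abs_le.mp hb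
  refine hm (Finset.mem_Icc.mpr ⟨?_, ?_⟩)
  · have : -R / T - 1 ≤ m := by
      rw [sub_le_iff_le_add, div_le_iff₀ hT]
      linarith [ht.2]
    exact_mod_cast (Int.floor_le _).trans this
  · have : (m : ℝ) ≤ R / T := by
      rw [le_div_iff₀ hT]
      linarith [ht.1]
    exact_mod_cast this.trans (Int.le_ceil _)

variable [MeasurableSpace E] [BorelSpace E] [SecondCountableTopology E]
  {μ : Measure E} [IsFiniteMeasureOnCompacts μ] [SFinite μ]

/-- Integrating a finite combination of integrable kernels over time and space. -/
lemma intervalIntegral_integral_sum_mul {ι : Type*} (S : Finset ι) (c : ι → ℂ)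
    {h : ι → ℝ × E → ℂ} (hc : ∀ i, Continuous (h i)) (hs : ∀ i, HasCompactSupport (h i))
    (a b : ℝ) :
    ∫ t in a..b, ∫ x, ∑ i ∈ S, c i * h i (t, x) ∂μ =
      ∑ i ∈ S, c i * ∫ t in a..b, ∫ x, h i (t, x) ∂μ := by
  have hx : ∀ t, ∫ x, ∑ i ∈ S, c i * h i (t, x) ∂μ = ∑ i ∈ S, c i * ∫ x, h i (t, x) ∂μ := by
    intro t
    rw [integral_finsetSum]
    · simp_rw [integral_const_mul]
    · exact fun i _ => (((hc i).comp (by fun_prop : Continuous fun x : E => (t, x))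
        ).integrable_of_hasCompactSupport ((hs i).time_slice t)).const_mul _
  simp_rw [hx]
  rw [intervalIntegral.integral_finsetSum]
  · simp_rw [intervalIntegral.integral_const_mul]
  · intro i _
    have := ((hc i).integrable_of_hasCompactSupport (μ := volume.prod μ) (hs i)).integral_prod_left
    exact this.intervalIntegrable.const_mul _

end

/-- Plancherel identity for the partial Fourier transform
`P_λ g(t,x) = Σ_{m∈ℤ} e^{-2πiλm} g(t+2πm, x)` in the time variable:
`∫_0^1 ‖P_λ g‖²_{L²([0,2π]×ℝⁿ)} dλ = ‖g‖²_{L²(ℝ×ℝⁿ)}`. -/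
theorem P_lambda_plancherel (n : ℕ) (hn : 1 ≤ n)
    (g : ℝ × EuclideanSpace ℝ (Fin n) → ℂ)
    (hg : Continuous g) (hsupp : HasCompactSupport g) :
    (∫ lam in (0:ℝ)..1, ∫ t in (0:ℝ)..(2*π), ∫ x : EuclideanSpace ℝ (Fin n),
        ‖∑' m : ℤ, Complex.exp (-(2 * (π : ℂ) * I * (lam : ℂ) * (m : ℂ))) *
            g (t + 2 * π * (m : ℝ), x)‖ ^ 2)
      = ∫ t : ℝ, ∫ x : EuclideanSpace ℝ (Fin n), ‖g (t, x)‖ ^ 2 := by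
  obtain ⟨S, hS⟩ := hsupp.exists_finset_translate_eq_zero Real.two_pi_pos
  set e : ℤ → ℝ → ℂ := fun m lam => Complex.exp (-(2 * (π : ℂ) * I * (lam : ℂ) * (m : ℂ)))
    with he
  have hecont : ∀ m, Continuous (e m) := fun m => by simp only [he]; fun_prop
  set h : ℤ × ℤ → ℝ × EuclideanSpace ℝ (Fin n) → ℂ := fun q p =>
    g (p.1 + 2 * π * (q.1 : ℝ), p.2) * conj (g (p.1 + 2 * π * (q.2 : ℝ), p.2)) with hh
  have hhc : ∀ q, Continuous (h q) := fun q => by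
    simp only [hh]
    exact (hg.comp (by fun_prop)).mul (Complex.continuous_conj.comp (hg.comp (by fun_prop)))
  have hhs : ∀ q, HasCompactSupport (h q) := fun q =>
    (hsupp.comp_time_translate _).mul_right
  have hFint : Integrable fun t : ℝ => ∫ x, ‖g (t, x)‖ ^ 2 := by
    have hc : Continuous fun p => ‖g p‖ ^ 2 := by fun_prop
    have hs : HasCompactSupport fun p => ‖g p‖ ^ 2 :=
      hsupp.comp_left (g := fun z : ℂ => ‖z‖ ^ 2) (by simp)
    exact (hc.integrable_of_hasCompactSupport (μ := volume.prod volume) hs).integral_prod_left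
  have hexpand : ∀ lam : ℝ, ∀ t ∈ Set.uIcc 0 (2 * π), ∀ x,
      ((‖∑' m : ℤ, e m lam * g (t + 2 * π * (m : ℝ), x)‖ ^ 2 : ℝ) : ℂ) =
        ∑ q ∈ S ×ˢ S, (e q.1 lam * conj (e q.2 lam)) * h q (t, x) := by
    intro lam t ht x
    rw [Set.uIcc_of_le Real.two_pi_pos.le] at ht
    rw [tsum_eq_sum (s := S) fun m hm => by rw [hS m hm t ht x, mul_zero], ofReal_pow,
      ← Complex.mul_conj', map_sum, Finset.sum_mul_sum, Finset.sum_product]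
    refine Finset.sum_congr rfl fun m _ => Finset.sum_congr rfl fun k _ => ?_
    simp only [hh, map_mul]
    ring
  have hdiag : ∀ m : ℤ, ∫ t in (0:ℝ)..(2 * π), ∫ x, h (m, m) (t, x) =
      ((∫ t in (0:ℝ)..(2 * π), ∫ x, ‖g (t + 2 * π * (m : ℝ), x)‖ ^ 2 : ℝ) : ℂ) := by
    intro m
    simp only [hh, Complex.mul_conj', ← intervalIntegral.integral_ofReal,
      ← integral_complex_ofReal, ofReal_pow]
  have hinner : ∀ lam : ℝ, ((∫ t in (0:ℝ)..(2 * π), ∫ x : EuclideanSpace ℝ (Fin n),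
      ‖∑' m : ℤ, e m lam * g (t + 2 * π * (m : ℝ), x)‖ ^ 2 : ℝ) : ℂ) =
      ∑ q ∈ S ×ˢ S, (e q.1 lam * conj (e q.2 lam)) *
        ∫ t in (0:ℝ)..(2 * π), ∫ x, h q (t, x) := by
    intro lam
    rw [← intervalIntegral_integral_sum_mul (S ×ˢ S)
      (fun q => e q.1 lam * conj (e q.2 lam)) hhc hhs, ← intervalIntegral.integral_ofReal]
    refine intervalIntegral.integral_congr fun t ht => ?_
    simp only [← integral_complex_ofReal, hexpand lam t ht]
  apply Complex.ofReal_injective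
  rw [← intervalIntegral.integral_ofReal]
  refine (intervalIntegral.integral_congr fun lam _ => hinner lam).trans ?_
  rw [intervalIntegral.integral_finsetSum fun q _ =>
    (((hecont q.1).mul (Complex.continuous_conj.comp (hecont q.2))).mul
      continuous_const).intervalIntegrable _ _]
  simp_rw [intervalIntegral.integral_mul_const, he, integral_exp_mul_conj_exp]
  rw [Finset.sum_product]
  simp only [ite_mul, one_mul, zero_mul, Finset.sum_ite_eq]
  rw [Finset.sum_congr rfl fun m hm => by rw [if_pos hm, hdiag m], ← ofReal_sum]
  congr 1
  refine HasSum.unique (hasSum_sum_of_ne_finset_zero fun m hm => ?_)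
    (hasSum_intervalIntegral_comp_add_mul_int hFint Real.two_pi_pos)
  refine (intervalIntegral.integral_congr fun t ht => ?_).trans intervalIntegral.integral_zero
  rw [Set.uIcc_of_le Real.two_pi_pos.le] at ht
  simp [hS m hm t ht]
end
end
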